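/- arXiv:2102.06935 — 2 statements merged into one kernel-verified Lean document; each statement's English description precedes it below -/
import Mathlib

section
/- Strong q-stability theorem (inequalities): for every n ≥ 1 and α ∈ [0,α_max], one has Θ_q^{(n)}(α) ≥ Θ_{q'}(α) for every q ∈ [1,∞); and for every q ∈ (−∞,1) \ {0}, Θ_q^{(n)}(α) ≤ Θ_{q'}(α) if α > 0 and Θ_q^{(n)}(0) ≤ 0; here q' := q/(q−1) (with q' := ∞ for q = 1 and the convention t/∞ := 0). -/
open MeasureTheory ProbabilityTheory Set Filter
open scoped ENNReal NNReal BigOperators Classical Topology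

noncomputable section

namespace BL

variable {X : Type*} {Y : Type*} [MeasurableSpace X] [MeasurableSpace Y]

/-! ### Extended logarithm, exponential, and division conventions -/

/-- Extended logarithm `ℝ≥0∞ → EReal`, with `log 0 = ⊥` and `log ⊤ = ⊤`. -/
def elog (x : ℝ≥0∞) : EReal :=
  if x = 0 then ⊥ else if x = ⊤ then ⊤ else ((Real.log x.toReal : ℝ) : EReal)

/-- Extended exponential `EReal → ℝ≥0∞`, with `exp ⊥ = 0` and `exp ⊤ = ⊤`. -/
def eexp (x : EReal) : ℝ≥0∞ :=
  if x = ⊥ then 0 else if x = ⊤ then ⊤ else ENNReal.ofReal (Real.exp x.toReal)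

/-- Division of an extended real by a real, with the conventions `a/0 = +∞` for `a > 0`,
`a/0 = -∞` for `a < 0` and `0/0 = 0`. -/
def ediv (x : EReal) (c : ℝ) : EReal :=
  if c = 0 then (if 0 < x then ⊤ else if x < 0 then ⊥ else 0)
  else x * ((c⁻¹ : ℝ) : EReal)

/-- Division of a real by an extended real, with the convention `t/(±∞) = 0`. -/
def divE (t : ℝ) (r : EReal) : EReal :=
  if r = ⊤ ∨ r = ⊥ then 0 else ((t / r.toReal : ℝ) : EReal)

/-- Hölder conjugate, as an extended real (`conj 1 = ⊤`). -/
def conj (q : ℝ) : EReal := if q = 1 then ⊤ else ((q / (q - 1) : ℝ) : EReal)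

/-! ### Norms with a real (possibly negative) exponent -/

/-- `p`-"norm" of an `ℝ≥0∞`-valued function (`p` a nonzero real). -/
def enorm (P : Measure X) (F : X → ℝ≥0∞) (p : ℝ) : ℝ≥0∞ :=
  (∫⁻ x, F x ^ p ∂P) ^ (1 / p)

/-- `∞`-norm (essential supremum) of an `ℝ≥0∞`-valued function. -/
def enormInf (P : Measure X) (F : X → ℝ≥0∞) : ℝ≥0∞ := essSup F P

/-- `p`-"norm" of a nonnegative real-valued function. -/
def rnorm (P : Measure X) (f : X → ℝ) (p : ℝ) : ℝ≥0∞ :=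
  enorm P (fun x => ENNReal.ofReal (f x)) p

/-- `∞`-norm of a nonnegative real-valued function. -/
def rnormInf (P : Measure X) (f : X → ℝ) : ℝ≥0∞ :=
  enormInf P (fun x => ENNReal.ofReal (f x))

/-! ### Divergences -/

/-- Kullback--Leibler divergence, valued in `EReal` (equal to `⊤` when undefined). -/
def KL (Q P : Measure X) : EReal :=
  if Q ≪ P ∧ Integrable (fun x => Real.log (Q.rnDeriv P x).toReal) Q then
    ((∫ x, Real.log (Q.rnDeriv P x).toReal ∂Q : ℝ) : EReal)
  else ⊤

/-- Rényi divergence of order `s` (`s = 1` gives the KL divergence). -/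
def Renyi (s : ℝ) (Q P : Measure X) : EReal :=
  if s = 1 then KL Q P
  else (((s - 1)⁻¹ : ℝ) : EReal) *
    elog (∫⁻ x, Q.rnDeriv (Q + P) x ^ s * P.rnDeriv (Q + P) x ^ (1 - s) ∂(Q + P))

/-- First marginal of a measure on a product space. -/
def m1 (P : Measure (X × Y)) : Measure X := P.map Prod.fst

/-- Second marginal of a measure on a product space. -/
def m2 (P : Measure (X × Y)) : Measure Y := P.map Prod.snd

/-- Couplings of a pair of (probability) measures. -/
def couplings (μ : Measure X) (ν : Measure Y) : Set (Measure (X × Y)) :=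
  {π | IsProbabilityMeasure π ∧ π.map Prod.fst = μ ∧ π.map Prod.snd = ν}

/-- `𝔻(QX, QY ‖ P)` : minimum relative entropy over couplings. -/
def Dmin (QX : Measure X) (QY : Measure Y) (P : Measure (X × Y)) : EReal :=
  ⨅ (π : Measure (X × Y)) (_ : π ∈ couplings QX QY), KL π P

/-! ### The functions φ and their envelopes -/

/-- `φ̲(s,t)`. -/
def phiL (P : Measure (X × Y)) (s t : ℝ) : EReal :=
  ⨅ (QX : Measure X) (QY : Measure Y) (_ : IsProbabilityMeasure QX)
    (_ : IsProbabilityMeasure QY) (_ : QX ≪ m1 P) (_ : QY ≪ m2 P)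
    (_ : KL QX (m1 P) = (s : EReal)) (_ : KL QY (m2 P) = (t : EReal)),
    Dmin QX QY P

/-- `φ̄(s,t)`. -/
def phiU (P : Measure (X × Y)) (s t : ℝ) : EReal :=
  ⨆ (QX : Measure X) (QY : Measure Y) (_ : IsProbabilityMeasure QX)
    (_ : IsProbabilityMeasure QY) (_ : QX ≪ m1 P) (_ : QY ≪ m2 P)
    (_ : KL QX (m1 P) = (s : EReal)) (_ : KL QY (m2 P) = (t : EReal)),
    Dmin QX QY P

/-- Lower convex envelope on `[0,∞)²`, via convex combinations of (at most) 4 points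
(Carathéodory). -/
def lce2 (F : ℝ → ℝ → EReal) (a b : ℝ) : EReal :=
  ⨅ (q : Fin 4 → ℝ) (x : Fin 4 → ℝ × ℝ) (_ : ∀ i, 0 ≤ q i) (_ : ∑ i, q i = 1)
    (_ : ∀ i, 0 ≤ (x i).1 ∧ 0 ≤ (x i).2)
    (_ : ∑ i, q i * (x i).1 = a) (_ : ∑ i, q i * (x i).2 = b),
    ∑ i, (q i : EReal) * F (x i).1 (x i).2

/-- Upper concave envelope on `[0,∞)²`. -/
def uce2 (F : ℝ → ℝ → EReal) (a b : ℝ) : EReal :=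
  ⨆ (q : Fin 4 → ℝ) (x : Fin 4 → ℝ × ℝ) (_ : ∀ i, 0 ≤ q i) (_ : ∑ i, q i = 1)
    (_ : ∀ i, 0 ≤ (x i).1 ∧ 0 ≤ (x i).2)
    (_ : ∑ i, q i * (x i).1 = a) (_ : ∑ i, q i * (x i).2 = b),
    ∑ i, (q i : EReal) * F (x i).1 (x i).2

/-- Lower convex envelope on `[0,∞)`. -/
def lce1 (F : ℝ → EReal) (a : ℝ) : EReal :=
  ⨅ (q : Fin 3 → ℝ) (x : Fin 3 → ℝ) (_ : ∀ i, 0 ≤ q i) (_ : ∑ i, q i = 1)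
    (_ : ∀ i, 0 ≤ x i) (_ : ∑ i, q i * x i = a),
    ∑ i, (q i : EReal) * F (x i)

/-- Upper concave envelope on `[0,∞)`. -/
def uce1 (F : ℝ → EReal) (a : ℝ) : EReal :=
  ⨆ (q : Fin 3 → ℝ) (x : Fin 3 → ℝ) (_ : ∀ i, 0 ≤ q i) (_ : ∑ i, q i = 1)
    (_ : ∀ i, 0 ≤ x i) (_ : ∑ i, q i * x i = a),
    ∑ i, (q i : EReal) * F (x i)

/-- `Θ̲(α,β)`: increasing lower convex envelope of `φ̲`. -/
def ThetaL (P : Measure (X × Y)) (α β : ℝ) : EReal :=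
  ⨅ (s : ℝ) (t : ℝ) (_ : α ≤ s) (_ : β ≤ t), lce2 (phiL P) s t

/-- `Θ̄(α,β)`: increasing upper concave envelope of `φ̄`. -/
def ThetaU (P : Measure (X × Y)) (α β : ℝ) : EReal :=
  ⨆ (s : ℝ) (t : ℝ) (_ : 0 ≤ s) (_ : s ≤ α) (_ : 0 ≤ t) (_ : t ≤ β), uce2 (phiU P) s t

/-- `φ_r(s) = inf_{t ≥ 0} (φ̲(s,t) - t/r)` for `r ∈ [1,∞]` (`r` an extended real). -/
def phiRinf (P : Measure (X × Y)) (r : EReal) (s : ℝ) : EReal :=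
  ⨅ (t : ℝ) (_ : 0 ≤ t), phiL P s t - divE t r

/-- `Θ_r(α)` for `r ∈ [1,∞]`. -/
def ThetaGe1 (P : Measure (X × Y)) (r : EReal) (α : ℝ) : EReal :=
  ⨅ (s : ℝ) (_ : α ≤ s), lce1 (phiRinf P r) s

/-- `φ_r(s) = sup_{t ≥ 0} (φ̄(s,t) - t/r)` for `r ∈ (0,1)`. -/
def phiSupR (P : Measure (X × Y)) (r : ℝ) (s : ℝ) : EReal :=
  ⨆ (t : ℝ) (_ : 0 ≤ t), phiU P s t - divE t (r : EReal)

/-- `φ_r(s)` for `r < 0`. -/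
def phiNeg (P : Measure (X × Y)) (r : ℝ) (s : ℝ) : EReal :=
  ⨆ (QX : Measure X) (_ : IsProbabilityMeasure QX) (_ : QX ≪ m1 P)
    (_ : KL QX (m1 P) = (s : EReal)),
    ⨅ (QY : Measure Y) (_ : IsProbabilityMeasure QY) (_ : QY ≪ m2 P),
      Dmin QX QY P - ediv (KL QY (m2 P)) r

/-- `φ_r(s)` for `r < 1`, `r ≠ 0`. -/
def phiLT1 (P : Measure (X × Y)) (r : ℝ) (s : ℝ) : EReal :=
  if 0 < r then phiSupR P r s else phiNeg P r s

/-- `Θ_r(α)` for `r < 1`, `r ≠ 0`. -/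
def ThetaLT1 (P : Measure (X × Y)) (r : ℝ) (α : ℝ) : EReal :=
  ⨆ (s : ℝ) (_ : 0 ≤ s) (_ : s ≤ α), uce1 (phiLT1 P r) s

/-- `α_max = sup {-log μ(A) : μ(A) > 0}`. -/
def alphaMax (μ : Measure X) : EReal :=
  ⨆ (A : Set X) (_ : MeasurableSet A) (_ : μ A ≠ 0), -elog (μ A)

/-! ### Entropies -/

/-- `Ent_{p,p}(f)`. -/
def entPP (P : Measure X) (f : X → ℝ) (p : ℝ) : EReal :=
  (((∫ x, f x ^ p * Real.log (f x ^ p) ∂P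
      - (∫ x, f x ^ p ∂P) * Real.log (∫ x, f x ^ p ∂P))
     / (∫ x, f x ^ p ∂P) : ℝ) : EReal)

/-- `Ent_{p,p̂}(f)` for a nonzero real `p` and a real `p̂`. -/
def ent (P : Measure X) (f : X → ℝ) (p phat : ℝ) : EReal :=
  if phat = p then entPP P f p
  else if phat = 0 then -elog (P {x | 0 < f x})
  else ((p * phat / (p - phat) : ℝ) : EReal) * (elog (rnorm P f p) - elog (rnorm P f phat))

/-- `Ent_{p,∞}(f)` for a nonzero real `p`. -/
def entTop (P : Measure X) (f : X → ℝ) (p : ℝ) : EReal :=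
  if rnormInf P f = ⊤ then (if 0 < p then ⊤ else ⊥)
  else ((-p : ℝ) : EReal) * (elog (rnorm P f p) - elog (rnormInf P f))

/-- `Ent_{p,p*}(f)` for a nonzero real `p` and `p* ∈ [0,∞]`. -/
def entE (P : Measure X) (f : X → ℝ) (p : ℝ) (ps : ℝ≥0∞) : EReal :=
  if ps = ⊤ then entTop P f p else ent P f p ps.toReal

/-- Admissible functions: measurable, nonnegative, not a.e. zero. -/
def Adm (P : Measure X) (f : X → ℝ) : Prop :=
  Measurable f ∧ (∀ x, 0 ≤ f x) ∧ ¬ f =ᵐ[P] (fun _ => 0)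

/-! ### Products -/

/-- `n`-fold product measure. -/
def piM (n : ℕ) (P : Measure X) : Measure (Fin n → X) := Measure.pi fun _ => P

def fstv {n : ℕ} (z : Fin n → X × Y) : Fin n → X := fun i => (z i).1
def sndv {n : ℕ} (z : Fin n → X × Y) : Fin n → Y := fun i => (z i).2

/-- `⟨f,g⟩ = ∫ f(xⁿ) g(yⁿ) dP^{⊗n}`. -/
def innerFG (P : Measure (X × Y)) (n : ℕ) (f : (Fin n → X) → ℝ) (g : (Fin n → Y) → ℝ) :
    ℝ≥0∞ :=
  ∫⁻ z, ENNReal.ofReal (f (fstv z)) * ENNReal.ofReal (g (sndv z)) ∂(piM n P)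

/-- The set `A × B` viewed inside `(X × Y)ⁿ`. -/
def prodSet {n : ℕ} (A : Set (Fin n → X)) (B : Set (Fin n → Y)) : Set (Fin n → X × Y) :=
  {z | fstv z ∈ A ∧ sndv z ∈ B}

/-! ### Kernels -/

/-- Product of kernel measures `⊗ᵢ κ(yᵢ)`. -/
def kpi {n : ℕ} (κ : Kernel Y X) (y : Fin n → Y) : Measure (Fin n → X) :=
  Measure.pi fun i => κ (y i)

/-- The conditional expectation operator `P_{X|Y}^{⊗n}(f)`. -/
def condOp {n : ℕ} (κ : Kernel Y X) (f : (Fin n → X) → ℝ) : (Fin n → Y) → ℝ≥0∞ :=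
  fun y => ∫⁻ x, ENNReal.ofReal (f x) ∂(kpi κ y)

/-- `κ` is a regular conditional probability of the first coordinate given the second. -/
def IsCondKernel (P : Measure (X × Y)) (κ : Kernel Y X) : Prop :=
  ∀ (A : Set X) (B : Set Y), MeasurableSet A → MeasurableSet B →
    P (A ×ˢ B) = ∫⁻ y in B, κ y A ∂(m2 P)

/-! ### η and `Λ̲*` -/

/-- The function `η_{p,p̂}(α,s)`. -/
def eta (p phat α : ℝ) (s : EReal) : EReal :=
  if 0 ≤ p ∧ 0 ≤ phat then max (ediv ((α : EReal) - s) p) (ediv ((α : EReal) - s) phat)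
  else if 0 < p ∧ phat < 0 then ediv ((α : EReal) - s) p
  else if 0 < phat ∧ p < 0 then ediv ((α : EReal) - s) phat
  else ⊥

/-- `Λ̲*_{p,q,p̂,q̂}(α,β)` (time sharing variable of size ≤ 4). -/
def LamLstar (P : Measure (X × Y)) (p q phat qhat α β : ℝ) : EReal :=
  ⨅ (w : Fin 4 → ℝ) (QX : Fin 4 → Measure X) (QY : Fin 4 → Measure Y)
    (_ : ∀ i, 0 ≤ w i) (_ : ∑ i, w i = 1)
    (_ : ∀ i, IsProbabilityMeasure (QX i)) (_ : ∀ i, QX i ≪ m1 P)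
    (_ : ∀ i, IsProbabilityMeasure (QY i)) (_ : ∀ i, QY i ≪ m2 P),
    (∑ i, (w i : EReal) * Dmin (QX i) (QY i) P)
      + eta p phat α (∑ i, (w i : EReal) * KL (QX i) (m1 P))
      + eta q qhat β (∑ i, (w i : EReal) * KL (QY i) (m2 P))

/-! ### Sub/supergradients (slopes in `[0,∞]`) -/

def IsSubgrad2 (F : ℝ → ℝ → EReal) (α β : ℝ) (u v : ℝ≥0∞) : Prop :=
  ∀ s t : ℝ, 0 ≤ s → 0 ≤ t →
    F α β + (u : EReal) * ((s - α : ℝ) : EReal) + (v : EReal) * ((t - β : ℝ) : EReal) ≤ F s t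

def IsSupergrad2 (F : ℝ → ℝ → EReal) (α β : ℝ) (u v : ℝ≥0∞) : Prop :=
  ∀ s t : ℝ, 0 ≤ s → 0 ≤ t →
    F s t ≤ F α β + (u : EReal) * ((s - α : ℝ) : EReal) + (v : EReal) * ((t - β : ℝ) : EReal)

def IsSubgrad1 (F : ℝ → EReal) (α : ℝ) (u : ℝ≥0∞) : Prop :=
  ∀ s : ℝ, 0 ≤ s → F α + (u : EReal) * ((s - α : ℝ) : EReal) ≤ F s

def IsSupergrad1 (F : ℝ → EReal) (α : ℝ) (u : ℝ≥0∞) : Prop :=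
  ∀ s : ℝ, 0 ≤ s → F s ≤ F α + (u : EReal) * ((s - α : ℝ) : EReal)

/-! ### The n-dimensional q-stability exponents -/

/-- `Θ_q^{(n)}(α)` for `q ≥ 1`. -/
def qStabSup (P : Measure (X × Y)) (κ : Kernel Y X) (n : ℕ) (q α : ℝ) : EReal :=
  -((((n : ℝ)⁻¹ : ℝ) : EReal) *
    elog (⨆ (A : Set (Fin n → X)) (_ : MeasurableSet A)
        (_ : piM n (m1 P) A ≤ ENNReal.ofReal (Real.exp (-((n : ℝ) * α)))),
        enorm (piM n (m2 P)) (fun y => kpi κ y A) q))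

/-- `Θ_q^{(n)}(α)` for `q < 1`, `q ≠ 0`. -/
def qStabInf (P : Measure (X × Y)) (κ : Kernel Y X) (n : ℕ) (q α : ℝ) : EReal :=
  -((((n : ℝ)⁻¹ : ℝ) : EReal) *
    elog (⨅ (A : Set (Fin n → X)) (_ : MeasurableSet A)
        (_ : ENNReal.ofReal (Real.exp (-((n : ℝ) * α))) ≤ piM n (m1 P) A),
        enorm (piM n (m2 P)) (fun y => kpi κ y A) q))

/-!
By the Gibbs variational principle `log ∫ w ∂P = sup_Q (∫ log w ∂Q - D(Q‖P))`, an affine bound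
relating the relative entropy `D(Q‖P)` to those of the marginals of `Q` yields a forward or
reverse Brascamp–Lieb inequality between `∫ u(x)^l * v(y)^b ∂P` and
`exp (-c) * (∫ u)^l * (∫ v)^b`, with `b = 1/q' = (q - 1)/q`. Such inequalities tensorize by
induction on the number of coordinates. A supporting line `s ↦ l * s + c` of the convex (concave)
envelope of `φ_{q'}` at `α` supplies the affine bound, and choosing for `u` the
indicator of `A` and for `v` the Hölder extremal `P_{X|Y}(A|·)^q` turns the inequality into a
bound on `‖P_{X|Y}(A|·)‖_q`.

In the forward direction, a supporting line exists only if `φ_{q'}` is finite somewhere beyond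
`α`. Otherwise every non-null set has mass at least `p = exp (-α)`, and a set of mass at most
`p ^ n` has fibres of mass at most `p ^ (n - 1)`, indexed up to null fibres by a set of mass at
most `p`. So the one-dimensional inequality for indicators of sets of mass at most `p` tensorizes
on its own.
-/

open InformationTheory

/-! ### Supporting lines of convex envelopes -/

lemma lce1_combo_le (F : ℝ → EReal) {a b x y : ℝ} (ha : 0 ≤ a) (hb : 0 ≤ b) (hab : a + b = 1)
    (hx : 0 ≤ x) (hy : 0 ≤ y) : lce1 F (a * x + b * y) ≤ a * F x + b * F y := by
  refine iInf_le_of_le ![a, b, 0] <| iInf_le_of_le ![x, y, y] <|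
    iInf_le_of_le (by simp [Fin.forall_fin_succ, ha, hb]) <|
    iInf_le_of_le (by simpa [Fin.sum_univ_three]) <|
    iInf_le_of_le (by simp [Fin.forall_fin_succ, hx, hy]) <|
    iInf_le_of_le (by simp [Fin.sum_univ_three]) ?_
  simp [Fin.sum_univ_three]

lemma combo_le_uce1 (F : ℝ → EReal) {a b x y : ℝ} (ha : 0 ≤ a) (hb : 0 ≤ b) (hab : a + b = 1)
    (hx : 0 ≤ x) (hy : 0 ≤ y) : a * F x + b * F y ≤ uce1 F (a * x + b * y) := by
  refine le_iSup_of_le ![a, b, 0] <| le_iSup_of_le ![x, y, y] <|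
    le_iSup_of_le (by simp [Fin.forall_fin_succ, ha, hb]) <|
    le_iSup_of_le (by simpa [Fin.sum_univ_three]) <|
    le_iSup_of_le (by simp [Fin.forall_fin_succ, hx, hy]) <|
    le_iSup_of_le (by simp [Fin.sum_univ_three]) ?_
  simp [Fin.sum_univ_three]

lemma lce1_le_self (F : ℝ → EReal) {s : ℝ} (hs : 0 ≤ s) : lce1 F s ≤ F s := by
  simpa using lce1_combo_le F zero_le_one le_rfl (add_zero 1) hs hs

lemma lce1_le_of_mem_segment (F : ℝ → EReal) {p p' x : ℝ × ℝ} (hp : 0 ≤ p.1 ∧ F p.1 ≤ p.2)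
    (hp' : 0 ≤ p'.1 ∧ F p'.1 ≤ p'.2) (hx : x ∈ segment ℝ p p') : lce1 F x.1 ≤ x.2 := by
  obtain ⟨a, b, ha, hb, hab, rfl⟩ := hx
  calc lce1 F (a * p.1 + b * p'.1)
    _ ≤ a * F p.1 + b * F p'.1 := lce1_combo_le F ha hb hab hp.1 hp'.1
    _ ≤ a * p.2 + b * p'.2 := add_le_add
        (mul_le_mul_of_nonneg_left hp.2 (EReal.coe_nonneg.2 ha))
        (mul_le_mul_of_nonneg_left hp'.2 (EReal.coe_nonneg.2 hb))
    _ = ((a * p.2 + b * p'.2 : ℝ) : EReal) := by norm_cast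

lemma le_uce1_of_mem_segment (F : ℝ → EReal) {p p' x : ℝ × ℝ} (hp : 0 ≤ p.1 ∧ p.2 ≤ F p.1)
    (hp' : 0 ≤ p'.1 ∧ p'.2 ≤ F p'.1) (hx : x ∈ segment ℝ p p') : x.2 ≤ uce1 F x.1 := by
  obtain ⟨a, b, ha, hb, hab, rfl⟩ := hx
  calc ((a * p.2 + b * p'.2 : ℝ) : EReal)
    _ = a * p.2 + b * p'.2 := by norm_cast
    _ ≤ a * F p.1 + b * F p'.1 := add_le_add
        (mul_le_mul_of_nonneg_left hp.2 (EReal.coe_nonneg.2 ha))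
        (mul_le_mul_of_nonneg_left hp'.2 (EReal.coe_nonneg.2 hb))
    _ ≤ uce1 F (a * p.1 + b * p'.1) := combo_le_uce1 F ha hb hab hp.1 hp'.1

lemma slope_le_slope_of_segment_le {p p' : ℝ × ℝ} {α K : ℝ}
    (h : ∀ x ∈ segment ℝ p p', α ≤ x.1 → K ≤ x.2) (hp : p.1 < α) (hp' : α < p'.1) :
    (K - p.2) / (α - p.1) ≤ (p'.2 - K) / (p'.1 - α) := by
  have hd : 0 < p'.1 - p.1 := by linarith
  set a := (p'.1 - α) / (p'.1 - p.1)
  set b := (α - p.1) / (p'.1 - p.1)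
  have hab : a + b = 1 := by simp only [a, b]; field_simp; ring
  have hmem : a • p + b • p' ∈ segment ℝ p p' :=
    ⟨a, b, div_nonneg (by linarith) hd.le, div_nonneg (by linarith) hd.le, hab, rfl⟩
  have hfst : (a • p + b • p').1 = α := by
    simp only [a, b, Prod.fst_add, Prod.smul_fst, smul_eq_mul]; field_simp; ring
  have hsnd : (a • p + b • p').2 = ((p'.1 - α) * p.2 + (α - p.1) * p'.2) / (p'.1 - p.1) := by
    simp only [a, b, Prod.snd_add, Prod.smul_snd, smul_eq_mul]; field_simp
  have hK := h _ hmem hfst.ge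
  rw [hsnd, le_div_iff₀ hd] at hK
  rw [div_le_div_iff₀ (by linarith) (by linarith)]
  linarith

/-- Only points with abscissa at least `α` have to stay above `K`, whence a nonnegative slope. -/
lemma exists_support_of_segment_le {E : Set (ℝ × ℝ)} {α K : ℝ}
    (hE : ∀ p ∈ E, ∀ p' ∈ E, ∀ x ∈ segment ℝ p p', α ≤ x.1 → K ≤ x.2) (hne : ∃ p ∈ E, α < p.1) :
    ∃ l, 0 ≤ l ∧ ∀ p ∈ E, K + l * (p.1 - α) ≤ p.2 := by
  have hself : ∀ p ∈ E, α ≤ p.1 → K ≤ p.2 := fun p hp => hE p hp p hp p (left_mem_segment ℝ p p)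
  let L := insert 0 ((fun p : ℝ × ℝ => (K - p.2) / (α - p.1)) '' {p ∈ E | p.1 < α})
  let R := (fun p : ℝ × ℝ => (p.2 - K) / (p.1 - α)) '' {p ∈ E | α < p.1}
  have hLR : ∀ x ∈ L, ∀ y ∈ R, x ≤ y := by
    rintro x (rfl | ⟨p, ⟨hp, hpα⟩, rfl⟩) _ ⟨p', ⟨hp', hp'α⟩, rfl⟩
    · exact div_nonneg (sub_nonneg.2 (hself p' hp' hp'α.le)) (sub_nonneg.2 hp'α.le)
    · exact slope_le_slope_of_segment_le (hE p hp p' hp') hpα hp'α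
  obtain ⟨p₁, hp₁, hp₁α⟩ := hne
  have hL : L.Nonempty := insert_nonempty _ _
  have hR : R.Nonempty := ⟨_, mem_image_of_mem _ ⟨hp₁, hp₁α⟩⟩
  obtain ⟨l, hlL, hlR⟩ := exists_between_of_forall_le hL hR hLR
  refine ⟨l, hlL (mem_insert _ _), fun p hp => ?_⟩
  rcases lt_trichotomy p.1 α with h | h | h
  · have := hlL (mem_insert_of_mem _ (mem_image_of_mem _ ⟨hp, h⟩))
    rw [div_le_iff₀ (by linarith)] at this
    linarith
  · rw [h, sub_self, mul_zero, add_zero]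
    exact hself p hp h.ge
  · have := hlR (mem_image_of_mem _ ⟨hp, h⟩)
    rw [le_div_iff₀ (by linarith)] at this
    linarith

lemma exists_line_le_of_le_lce1 (F : ℝ → EReal) {α s₁ K : ℝ} (hα : 0 ≤ α) (hs₁ : α < s₁)
    (hF : F s₁ ≠ ⊤) (hK : (K : EReal) ≤ ⨅ (s : ℝ) (_ : α ≤ s), lce1 F s) :
    ∃ l c : ℝ, 0 ≤ l ∧ l * α + c = K ∧ ∀ s, 0 ≤ s → ((l * s + c : ℝ) : EReal) ≤ F s := by
  obtain ⟨l, hl, hline⟩ := exists_support_of_segment_le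
    (E := {p | 0 ≤ p.1 ∧ F p.1 ≤ (p.2 : EReal)}) (α := α) (K := K)
    (fun p hp p' hp' x hx hxα => EReal.coe_le_coe_iff.1 <|
      (hK.trans (iInf₂_le x.1 hxα)).trans (lce1_le_of_mem_segment F hp hp' hx))
    ⟨(s₁, (F s₁).toReal), ⟨hα.trans hs₁.le, EReal.le_coe_toReal hF⟩, hs₁⟩
  refine ⟨l, K - l * α, hl, by ring, fun s hs => EReal.le_of_forall_lt_iff_le.1 fun a ha => ?_⟩
  have := hline (s, a) ⟨hs, ha.le⟩
  exact EReal.coe_le_coe_iff.2 (by linarith)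

lemma exists_le_line_of_uce1_le (F : ℝ → EReal) {α K : ℝ} (hα : 0 < α) (hF : F 0 ≠ ⊥)
    (hK : (⨆ (s : ℝ) (_ : 0 ≤ s) (_ : s ≤ α), uce1 F s) ≤ (K : EReal)) :
    ∃ l, 0 ≤ l ∧ ∀ s, 0 ≤ s → F s ≤ ((K + l * (s - α) : ℝ) : EReal) := by
  -- The point reflection of the hypograph reduces the claim to the convex case.
  obtain ⟨l, hl, hline⟩ := exists_support_of_segment_le
    (E := {p | 0 ≤ (-p).1 ∧ ((-p).2 : EReal) ≤ F (-p).1}) (α := -α) (K := -K)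
    (fun p hp p' hp' x hx hxα => by
      have hx' : -x ∈ segment ℝ (-p) (-p') := by
        obtain ⟨a, b, ha, hb, hab, rfl⟩ := hx
        exact ⟨a, b, ha, hb, hab, by simp only [smul_neg, neg_add]⟩
      have hx₀ : 0 ≤ (-x).1 := by
        obtain ⟨a, b, ha, hb, -, h⟩ := hx'
        rw [← h]
        exact add_nonneg (mul_nonneg ha hp.1) (mul_nonneg hb hp'.1)
      have h := (le_uce1_of_mem_segment F hp hp' hx').trans <|
        (le_iSup₂_of_le hx₀ (neg_le.1 hxα) le_rfl).trans <|
          (le_iSup (fun s : ℝ => ⨆ (_ : 0 ≤ s) (_ : s ≤ α), uce1 F s) _).trans hK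
      exact neg_le.1 (EReal.coe_le_coe_iff.1 h))
    ⟨(0, -(F 0).toReal), by simpa using EReal.coe_toReal_le hF, by simpa using hα⟩
  refine ⟨l, hl, fun s hs => EReal.ge_of_forall_gt_iff_ge.1 fun a ha => ?_⟩
  have := hline (-s, -a) (by simpa using ⟨hs, ha.le⟩)
  exact EReal.coe_le_coe_iff.2 (by linarith)

lemma exists_lt_line_of_uce1_lt (F : ℝ → EReal) {α z : ℝ} (hα : 0 < α) (hF : F 0 ≠ ⊥)
    (hz : (⨆ (s : ℝ) (_ : 0 ≤ s) (_ : s ≤ α), uce1 F s) < (z : EReal)) :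
    ∃ l c : ℝ, 0 < l ∧ l * α + c = z ∧ ∀ s, 0 ≤ s → F s < ((l * s + c : ℝ) : EReal) := by
  obtain ⟨K, hK, hKz⟩ := EReal.lt_iff_exists_real_btwn.1 hz
  rw [EReal.coe_lt_coe_iff] at hKz
  obtain ⟨l, hl, hline⟩ := exists_le_line_of_uce1_le F hα hF hK.le
  obtain ⟨δ, hδ, hδα⟩ : ∃ δ, 0 < δ ∧ δ * α = (z - K) / 2 :=
    ⟨(z - K) / 2 / α, div_pos (by linarith) hα, by field_simp⟩
  refine ⟨l + δ, z - (l + δ) * α, by positivity, by ring, fun s hs =>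
    (hline s hs).trans_lt (EReal.coe_lt_coe_iff.2 ?_)⟩
  nlinarith [mul_nonneg hδ.le hs]

/-! ### Relative entropy and its variational formula -/

section RelativeEntropy

variable {Ω : Type*} [MeasurableSpace Ω] {Q P : Measure Ω}

lemma KL_eq_coe_toReal [IsProbabilityMeasure Q] [IsProbabilityMeasure P] (h : klDiv Q P ≠ ⊤) :
    KL Q P = ((klDiv Q P).toReal : EReal) := by
  have hKL := klDiv_ne_top_iff.1 h
  rw [toReal_klDiv_of_measure_eq hKL.1 (by simp only [measure_univ])]
  exact if_pos hKL

lemma klDiv_ne_top_of_KL_ne_top (h : KL Q P ≠ ⊤) : klDiv Q P ≠ ⊤ := by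
  rw [klDiv_ne_top_iff]
  by_contra hcon
  exact h (if_neg hcon)

lemma KL_self (P : Measure Ω) [IsProbabilityMeasure P] : KL P P = 0 := by
  simp [KL_eq_coe_toReal, klDiv_self]

lemma KL_nonneg [IsProbabilityMeasure Q] [IsProbabilityMeasure P] : 0 ≤ KL Q P := by
  by_cases h : KL Q P = ⊤
  · exact h ▸ le_top
  · rw [KL_eq_coe_toReal (klDiv_ne_top_of_KL_ne_top h)]
    exact EReal.coe_nonneg.2 ENNReal.toReal_nonneg

lemma klDiv_ne_top_of_rnDeriv_le [IsFiniteMeasure Q] [IsFiniteMeasure P] (hQP : Q ≪ P) {C : ℝ≥0}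
    (hC : ∀ᵐ x ∂P, Q.rnDeriv P x ≤ C) : klDiv Q P ≠ ⊤ := by
  refine klDiv_ne_top hQP ((integrable_klFun_rnDeriv_iff hQP).1 ?_)
  obtain ⟨B, hB⟩ := isCompact_Icc.exists_bound_of_continuousOn
    (continuous_klFun.continuousOn (s := Icc 0 (C : ℝ)))
  refine .of_bound (measurable_klFun.comp
    (Measure.measurable_rnDeriv Q P).ennreal_toReal).aestronglyMeasurable B ?_
  filter_upwards [hC] with x hx
  exact hB _ ⟨ENNReal.toReal_nonneg, ENNReal.toReal_le_coe_of_le_coe hx⟩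

lemma ofReal_exp_log_toReal {a : ℝ≥0∞} (h₀ : a ≠ 0) (h : a ≠ ⊤) :
    ENNReal.ofReal (Real.exp (Real.log a.toReal)) = a := by
  rw [Real.exp_log (ENNReal.toReal_pos h₀ h), ENNReal.ofReal_toReal h]

lemma log_toReal_rpow (a : ℝ≥0∞) (l : ℝ) :
    Real.log (a ^ l).toReal = l * Real.log a.toReal := by
  rw [← ENNReal.toReal_rpow]
  rcases (ENNReal.toReal_nonneg (a := a)).eq_or_lt with h | h
  · rcases eq_or_ne l 0 with rfl | hl
    · simp
    · simp [← h, Real.zero_rpow hl]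
  · exact Real.log_rpow h l

lemma ofReal_exp_integral_le_lintegral [IsProbabilityMeasure Q] {g : Ω → ℝ}
    (hg : Integrable g Q) :
    ENNReal.ofReal (Real.exp (∫ x, g x ∂Q)) ≤ ∫⁻ x, ENNReal.ofReal (Real.exp (g x)) ∂Q := by
  by_cases htop : ∫⁻ x, ENNReal.ofReal (Real.exp (g x)) ∂Q = ⊤
  · exact htop ▸ le_top
  have hexp₀ : 0 ≤ᵐ[Q] fun x => Real.exp (g x) := .of_forall fun x => (Real.exp_pos _).le
  have hexp : Integrable (fun x => Real.exp (g x)) Q :=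
    (lintegral_ofReal_ne_top_iff_integrable
      (Real.continuous_exp.comp_aestronglyMeasurable hg.1) hexp₀).1 htop
  rw [← ofReal_integral_eq_lintegral_ofReal hexp hexp₀]
  exact ENNReal.ofReal_le_ofReal <| convexOn_exp.map_integral_le Real.continuous_exp.continuousOn
    isClosed_univ (by simp) hg hexp

lemma lintegral_div_rnDeriv_le [SigmaFinite Q] [SigmaFinite P] (hQP : Q ≪ P)
    {u : Ω → ℝ≥0∞} (hu : Measurable u) :
    ∫⁻ x, u x / Q.rnDeriv P x ∂Q ≤ ∫⁻ x, u x ∂P := by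
  have hdiv : Measurable fun x => u x / Q.rnDeriv P x := hu.div (Measure.measurable_rnDeriv Q P)
  rw [← lintegral_rnDeriv_mul hQP hdiv.aemeasurable]
  exact lintegral_mono fun x => ENNReal.mul_div_le

/-- One half of the Donsker–Varadhan variational formula: Jensen's inequality for the exponential
of `log u - log (dQ/dP)`. -/
lemma ofReal_exp_integral_log_sub_klDiv_le_lintegral [IsProbabilityMeasure Q]
    [IsProbabilityMeasure P] (hQP : klDiv Q P ≠ ⊤) {u : Ω → ℝ≥0∞} (hu : Measurable u)
    (hu₀ : ∀ᵐ x ∂Q, u x ≠ 0) (hlog : Integrable (fun x => Real.log (u x).toReal) Q) :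
    ENNReal.ofReal (Real.exp (∫ x, Real.log (u x).toReal ∂Q - (klDiv Q P).toReal))
      ≤ ∫⁻ x, u x ∂P := by
  by_cases htop : ∫⁻ x, u x ∂P = ⊤
  · exact htop ▸ le_top
  obtain ⟨hac, hllr⟩ := klDiv_ne_top_iff.1 hQP
  have hexp : (fun x => ENNReal.ofReal (Real.exp (Real.log (u x).toReal - llr Q P x)))
      =ᵐ[Q] fun x => u x / Q.rnDeriv P x := by
    filter_upwards [hu₀, hac.ae_le (ae_lt_top hu htop), Measure.rnDeriv_pos hac,
      hac.ae_le (Measure.rnDeriv_lt_top Q P)] with x hx₀ hx hρ₀ hρ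
    have hρ' := ENNReal.toReal_pos hρ₀.ne' hρ.ne
    rw [llr_def, Real.exp_sub, Real.exp_log (ENNReal.toReal_pos hx₀ hx.ne), Real.exp_log hρ',
      ENNReal.ofReal_div_of_pos hρ', ENNReal.ofReal_toReal hx.ne, ENNReal.ofReal_toReal hρ.ne]
  rw [toReal_klDiv_of_measure_eq hac (by simp only [measure_univ]), ← integral_sub hlog hllr]
  calc ENNReal.ofReal (Real.exp (∫ x, (Real.log (u x).toReal - llr Q P x) ∂Q))
    _ ≤ ∫⁻ x, ENNReal.ofReal (Real.exp (Real.log (u x).toReal - llr Q P x)) ∂Q :=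
        ofReal_exp_integral_le_lintegral (hlog.sub hllr)
    _ = ∫⁻ x, u x / Q.rnDeriv P x ∂Q := lintegral_congr_ae hexp
    _ ≤ ∫⁻ x, u x ∂P := lintegral_div_rnDeriv_le hac hu

lemma integral_log_sub_klDiv_le_log_lintegral [IsProbabilityMeasure Q] [IsProbabilityMeasure P]
    (hQP : klDiv Q P ≠ ⊤) {u : Ω → ℝ≥0∞} (hu : Measurable u) (hu₀ : ∀ᵐ x ∂Q, u x ≠ 0)
    (hlog : Integrable (fun x => Real.log (u x).toReal) Q) (htop : ∫⁻ x, u x ∂P ≠ ⊤) :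
    ∫ x, Real.log (u x).toReal ∂Q - (klDiv Q P).toReal ≤ Real.log (∫⁻ x, u x ∂P).toReal := by
  have h := ofReal_exp_integral_log_sub_klDiv_le_lintegral hQP hu hu₀ hlog
  rw [ENNReal.ofReal_le_iff_le_toReal htop] at h
  exact (Real.le_log_iff_exp_le ((Real.exp_pos _).trans_le h)).2 h

lemma ofReal_exp_integral_log_rpow_sub_klDiv_le_rpow_lintegral [IsProbabilityMeasure Q]
    [IsProbabilityMeasure P] (hQP : klDiv Q P ≠ ⊤) {u : Ω → ℝ≥0∞} (hu : Measurable u) {l : ℝ}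
    (hl : 0 ≤ l) (hu₀ : ∀ᵐ x ∂Q, u x ^ l ≠ 0)
    (hlog : Integrable (fun x => Real.log (u x ^ l).toReal) Q) :
    ENNReal.ofReal (Real.exp (∫ x, Real.log (u x ^ l).toReal ∂Q - l * (klDiv Q P).toReal))
      ≤ (∫⁻ x, u x ∂P) ^ l := by
  rcases hl.eq_or_lt with rfl | hl
  · simp
  simp only [log_toReal_rpow] at hlog ⊢
  have hlog' : Integrable (fun x => Real.log (u x).toReal) Q :=
    (integrable_const_mul_iff (isUnit_iff_ne_zero.2 hl.ne') _).1 hlog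
  have hu₀' : ∀ᵐ x ∂Q, u x ≠ 0 := hu₀.mono fun x hx h => hx (by rw [h, ENNReal.zero_rpow_of_pos hl])
  rw [integral_const_mul, ← mul_sub, mul_comm l, Real.exp_mul,
    ← ENNReal.ofReal_rpow_of_nonneg (Real.exp_pos _).le hl.le]
  exact ENNReal.rpow_le_rpow
    (ofReal_exp_integral_log_sub_klDiv_le_lintegral hQP hu hu₀' hlog') hl.le

/-- The probability measure whose density with respect to `P` is proportional to `w`; it realises
equality in the variational formula. The density is `0` when `w` has infinite integral. -/
def tilt (P : Measure Ω) (w : Ω → ℝ≥0∞) : Measure Ω :=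
  P.withDensity fun x => w x / ∫⁻ y, w y ∂P

section Tilt

variable {w : Ω → ℝ≥0∞} {M : ℝ≥0}

lemma lintegral_ne_top_of_le_coe [IsFiniteMeasure P] (hM : ∀ x, w x ≤ M) : ∫⁻ x, w x ∂P ≠ ⊤ :=
  ((lintegral_mono hM).trans_lt (by simp [ENNReal.mul_lt_top])).ne

lemma isProbabilityMeasure_tilt (hw : Measurable w) (h₀ : ∫⁻ x, w x ∂P ≠ 0)
    (htop : ∫⁻ x, w x ∂P ≠ ⊤) : IsProbabilityMeasure (tilt P w) := by
  constructor
  simp only [tilt, withDensity_apply _ MeasurableSet.univ, Measure.restrict_univ, div_eq_mul_inv]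
  rw [lintegral_mul_const _ hw, ENNReal.mul_inv_cancel h₀ htop]

lemma tilt_absolutelyContinuous : tilt P w ≪ P := withDensity_absolutelyContinuous _ _

lemma ae_tilt_ne_zero (hw : Measurable w) : ∀ᵐ x ∂tilt P w, w x ≠ 0 := by
  rw [tilt, ae_withDensity_iff (hw.div_const _)]
  exact .of_forall fun x hx h => hx (by rw [h, ENNReal.zero_div])

lemma rnDeriv_tilt [SigmaFinite P] (hw : Measurable w) :
    (tilt P w).rnDeriv P =ᵐ[P] fun x => w x / ∫⁻ y, w y ∂P :=
  Measure.rnDeriv_withDensity P (hw.div_const _)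

lemma klDiv_tilt_ne_top [IsFiniteMeasure P] (hw : Measurable w) (hM : ∀ x, w x ≤ M)
    (h₀ : ∫⁻ x, w x ∂P ≠ 0) : klDiv (tilt P w) P ≠ ⊤ := by
  have := isProbabilityMeasure_tilt hw h₀ (lintegral_ne_top_of_le_coe hM)
  refine klDiv_ne_top_of_rnDeriv_le tilt_absolutelyContinuous
    (C := (M / ∫⁻ y, w y ∂P).toNNReal) ?_
  filter_upwards [rnDeriv_tilt hw] with x hx
  rw [hx, ENNReal.coe_toNNReal (ENNReal.div_ne_top ENNReal.coe_ne_top h₀)]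
  exact ENNReal.div_le_div_right (hM x) _

lemma llr_tilt [IsFiniteMeasure P] (hw : Measurable w) (hM : ∀ x, w x ≤ M)
    (h₀ : ∫⁻ x, w x ∂P ≠ 0) : llr (tilt P w) P =ᵐ[tilt P w] fun x =>
      Real.log (w x).toReal - Real.log (∫⁻ y, w y ∂P).toReal := by
  filter_upwards [tilt_absolutelyContinuous.ae_le (rnDeriv_tilt hw), ae_tilt_ne_zero hw]
    with x hx hx₀
  simp only [llr_def, hx, ENNReal.toReal_div]
  rw [Real.log_div]
  · exact (ENNReal.toReal_pos hx₀ (ne_top_of_le_ne_top ENNReal.coe_ne_top (hM x))).ne'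
  · exact (ENNReal.toReal_pos h₀ (lintegral_ne_top_of_le_coe hM)).ne'

lemma integrable_log_tilt [IsFiniteMeasure P] (hw : Measurable w) (hM : ∀ x, w x ≤ M)
    (h₀ : ∫⁻ x, w x ∂P ≠ 0) : Integrable (fun x => Real.log (w x).toReal) (tilt P w) := by
  have := isProbabilityMeasure_tilt hw h₀ (lintegral_ne_top_of_le_coe hM)
  have hllr := (klDiv_ne_top_iff.1 (klDiv_tilt_ne_top hw hM h₀)).2
  exact ((hllr.congr (llr_tilt hw hM h₀)).add
    (integrable_const (Real.log (∫⁻ y, w y ∂P).toReal))).congr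
      (.of_forall fun x => sub_add_cancel _ _)

lemma integral_log_sub_klDiv_tilt [IsProbabilityMeasure P] (hw : Measurable w)
    (hM : ∀ x, w x ≤ M) (h₀ : ∫⁻ x, w x ∂P ≠ 0) :
    ∫ x, Real.log (w x).toReal ∂(tilt P w) - (klDiv (tilt P w) P).toReal
      = Real.log (∫⁻ x, w x ∂P).toReal := by
  have := isProbabilityMeasure_tilt hw h₀ (lintegral_ne_top_of_le_coe hM)
  rw [toReal_klDiv_of_measure_eq tilt_absolutelyContinuous (by simp only [measure_univ]),
    integral_congr_ae (llr_tilt hw hM h₀),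
    integral_sub (integrable_log_tilt hw hM h₀) (integrable_const _)]
  simp

end Tilt

end RelativeEntropy

/-! ### The forward inequality in dimension one -/

instance isProbabilityMeasure_m1 (P : Measure (X × Y)) [IsProbabilityMeasure P] :
    IsProbabilityMeasure (m1 P) :=
  Measure.isProbabilityMeasure_map measurable_fst.aemeasurable

instance isProbabilityMeasure_m2 (P : Measure (X × Y)) [IsProbabilityMeasure P] :
    IsProbabilityMeasure (m2 P) :=
  Measure.isProbabilityMeasure_map measurable_snd.aemeasurable

lemma klDiv_m1_ne_top {Q P : Measure (X × Y)} [IsFiniteMeasure Q] [IsFiniteMeasure P]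
    (h : klDiv Q P ≠ ⊤) : klDiv (m1 Q) (m1 P) ≠ ⊤ :=
  ne_top_of_le_ne_top h (klDiv_map_le Q P measurable_fst)

lemma klDiv_m2_ne_top {Q P : Measure (X × Y)} [IsFiniteMeasure Q] [IsFiniteMeasure P]
    (h : klDiv Q P ≠ ⊤) : klDiv (m2 Q) (m2 P) ≠ ⊤ :=
  ne_top_of_le_ne_top h (klDiv_map_le Q P measurable_snd)

lemma log_toReal_nonpos {a : ℝ≥0∞} (ha : a ≤ 1) : Real.log a.toReal ≤ 0 :=
  Real.log_nonpos ENNReal.toReal_nonneg (ENNReal.toReal_mono ENNReal.one_ne_top ha)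

lemma log_toReal_mul {a b : ℝ≥0∞} (ha₀ : a ≠ 0) (ha : a ≤ 1) (hb₀ : b ≠ 0) (hb : b ≤ 1) :
    Real.log (a * b).toReal = Real.log a.toReal + Real.log b.toReal := by
  rw [ENNReal.toReal_mul, Real.log_mul]
  · exact (ENNReal.toReal_pos ha₀ (ne_top_of_le_ne_top ENNReal.one_ne_top ha)).ne'
  · exact (ENNReal.toReal_pos hb₀ (ne_top_of_le_ne_top ENNReal.one_ne_top hb)).ne'

lemma integrable_and_integrable_of_add_of_nonpos {Ω : Type*} [MeasurableSpace Ω] {Q : Measure Ω}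
    {a b : Ω → ℝ} (ha : Measurable a) (hb : Measurable b) (ha₀ : ∀ x, a x ≤ 0)
    (hb₀ : ∀ x, b x ≤ 0) (h : Integrable (fun x => a x + b x) Q) :
    Integrable a Q ∧ Integrable b Q := by
  refine ⟨h.mono ha.aestronglyMeasurable (.of_forall fun x => ?_),
    h.mono hb.aestronglyMeasurable (.of_forall fun x => ?_)⟩ <;>
  · rw [Real.norm_of_nonpos (add_nonpos (ha₀ x) (hb₀ x)), Real.norm_of_nonpos (by simp [ha₀, hb₀])]
    linarith [ha₀ x, hb₀ x]

lemma exists_lintegral_mul_eq_ofReal_exp (P : Measure (X × Y)) [IsProbabilityMeasure P]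
    {f : X → ℝ≥0∞} {g : Y → ℝ≥0∞} (hf : Measurable f) (hg : Measurable g) (hf₁ : ∀ x, f x ≤ 1)
    (hg₁ : ∀ y, g y ≤ 1) (hZ : ∫⁻ z, f z.1 * g z.2 ∂P ≠ 0) :
    ∃ Q : Measure (X × Y), IsProbabilityMeasure Q ∧ klDiv Q P ≠ ⊤ ∧
      (∀ᵐ x ∂m1 Q, f x ≠ 0) ∧ (∀ᵐ y ∂m2 Q, g y ≠ 0) ∧
      Integrable (fun x => Real.log (f x).toReal) (m1 Q) ∧
      Integrable (fun y => Real.log (g y).toReal) (m2 Q) ∧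
      ∫⁻ z, f z.1 * g z.2 ∂P = ENNReal.ofReal (Real.exp (∫ x, Real.log (f x).toReal ∂m1 Q
        + ∫ y, Real.log (g y).toReal ∂m2 Q - (klDiv Q P).toReal)) := by
  set w : X × Y → ℝ≥0∞ := fun z => f z.1 * g z.2
  have hw : Measurable w := (hf.comp measurable_fst).mul (hg.comp measurable_snd)
  have hw₁ : ∀ z, w z ≤ (1 : ℝ≥0) := fun z => by
    simpa using mul_le_mul' (hf₁ z.1) (hg₁ z.2)
  have htop := lintegral_ne_top_of_le_coe hw₁ (P := P)
  have hQ := isProbabilityMeasure_tilt hw hZ htop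
  set Q := tilt P w
  have hfg₀ : ∀ᵐ z ∂Q, f z.1 ≠ 0 ∧ g z.2 ≠ 0 :=
    (ae_tilt_ne_zero hw).mono fun z hz => mul_ne_zero_iff.1 hz
  have hlogf : Measurable fun x => Real.log (f x).toReal := hf.ennreal_toReal.log
  have hlogg : Measurable fun y => Real.log (g y).toReal := hg.ennreal_toReal.log
  have hlog : (fun z => Real.log (w z).toReal) =ᵐ[Q]
      fun z => Real.log (f z.1).toReal + Real.log (g z.2).toReal :=
    hfg₀.mono fun z hz => log_toReal_mul hz.1 (hf₁ _) hz.2 (hg₁ _)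
  obtain ⟨hintf, hintg⟩ := integrable_and_integrable_of_add_of_nonpos
    (hlogf.comp measurable_fst) (hlogg.comp measurable_snd)
    (fun z => log_toReal_nonpos (hf₁ z.1)) (fun z => log_toReal_nonpos (hg₁ z.2))
    ((integrable_log_tilt hw hw₁ hZ).congr hlog)
  refine ⟨Q, hQ, klDiv_tilt_ne_top hw hw₁ hZ, ?_, ?_, ?_, ?_, ?_⟩
  · exact (ae_map_iff measurable_fst.aemeasurable (hf (measurableSet_singleton 0).compl)).2
      (hfg₀.mono fun _ h => h.1)
  · exact (ae_map_iff measurable_snd.aemeasurable (hg (measurableSet_singleton 0).compl)).2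
      (hfg₀.mono fun _ h => h.2)
  · exact (integrable_map_measure hlogf.aestronglyMeasurable measurable_fst.aemeasurable).2 hintf
  · exact (integrable_map_measure hlogg.aestronglyMeasurable measurable_snd.aemeasurable).2 hintg
  · have hsum : ∫ x, Real.log (f x).toReal ∂m1 Q + ∫ y, Real.log (g y).toReal ∂m2 Q
        = ∫ z, Real.log (w z).toReal ∂Q := by
      rw [m1, m2, integral_map measurable_fst.aemeasurable hlogf.aestronglyMeasurable,
        integral_map measurable_snd.aemeasurable hlogg.aestronglyMeasurable, integral_congr_ae hlog]
      exact (integral_add hintf hintg).symm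
    rw [hsum, integral_log_sub_klDiv_tilt hw hw₁ hZ, ofReal_exp_log_toReal hZ htop]

/-- The relative entropy of any law with respect to `P` dominates an affine function of the
relative entropies of its marginals: the dual form of a forward Brascamp–Lieb inequality with
exponents `l` and `b`. -/
def MarginalDivBound (P : Measure (X × Y)) (l b c : ℝ) : Prop :=
  ∀ Q : Measure (X × Y), IsProbabilityMeasure Q → klDiv Q P ≠ ⊤ →
    l * (klDiv (m1 Q) (m1 P)).toReal + b * (klDiv (m2 Q) (m2 P)).toReal + c ≤ (klDiv Q P).toReal

lemma MarginalDivBound.lintegral_rpow_mul_rpow_le {P : Measure (X × Y)} [IsProbabilityMeasure P]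
    {l b c : ℝ} (h : MarginalDivBound P l b c) (hl : 0 ≤ l) (hb : 0 ≤ b) {u : X → ℝ≥0∞}
    {v : Y → ℝ≥0∞} (hu : Measurable u) (hv : Measurable v) (hu₁ : ∀ x, u x ≤ 1)
    (hv₁ : ∀ y, v y ≤ 1) :
    ∫⁻ z, u z.1 ^ l * v z.2 ^ b ∂P
      ≤ ENNReal.ofReal (Real.exp (-c)) * (∫⁻ x, u x ∂m1 P) ^ l * (∫⁻ y, v y ∂m2 P) ^ b := by
  by_cases hZ : ∫⁻ z, u z.1 ^ l * v z.2 ^ b ∂P = 0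
  · exact hZ ▸ zero_le
  obtain ⟨Q, hQ, hD, hu₀, hv₀, hiu, hiv, hQZ⟩ := exists_lintegral_mul_eq_ofReal_exp P
    (hu.pow_const l) (hv.pow_const b) (fun x => ENNReal.rpow_le_one (hu₁ x) hl)
    (fun y => ENNReal.rpow_le_one (hv₁ y) hb) hZ
  rw [hQZ]
  refine le_trans ?_ (mul_le_mul' (mul_le_mul' le_rfl
    (ofReal_exp_integral_log_rpow_sub_klDiv_le_rpow_lintegral (klDiv_m1_ne_top hD) hu hl hu₀ hiu))
    (ofReal_exp_integral_log_rpow_sub_klDiv_le_rpow_lintegral (klDiv_m2_ne_top hD) hv hb hv₀ hiv))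
  rw [← ENNReal.ofReal_mul (Real.exp_pos _).le, ← ENNReal.ofReal_mul (by positivity),
    ← Real.exp_add, ← Real.exp_add]
  refine ENNReal.ofReal_le_ofReal (Real.exp_le_exp.2 ?_)
  linarith [h Q hQ hD]

lemma log_toReal_indicator_one {S : Type*} (B : Set S) (x : S) :
    Real.log (B.indicator (1 : S → ℝ≥0∞) x).toReal = 0 := by
  by_cases hx : x ∈ B <;> simp [hx]

lemma ofReal_exp_neg_klDiv_le_measure {Ω : Type*} [MeasurableSpace Ω] {Q R : Measure Ω}
    [IsProbabilityMeasure Q] [IsProbabilityMeasure R] (hQ : klDiv Q R ≠ ⊤) {B : Set Ω}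
    (hB : MeasurableSet B) (hQB : ∀ᵐ x ∂Q, B.indicator (1 : Ω → ℝ≥0∞) x ≠ 0) :
    ENNReal.ofReal (Real.exp (-(klDiv Q R).toReal)) ≤ R B := by
  have hDV := ofReal_exp_integral_log_sub_klDiv_le_lintegral hQ (measurable_one.indicator hB) hQB
    ((integrable_const (0 : ℝ)).congr (.of_forall fun x => (log_toReal_indicator_one B x).symm))
  simpa only [log_toReal_indicator_one, integral_zero, zero_sub, lintegral_indicator_one hB]
    using hDV

lemma lintegral_indicator_mul_rpow_le {P : Measure (X × Y)} [IsProbabilityMeasure P] {α b K : ℝ}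
    (h : ∀ Q : Measure (X × Y), IsProbabilityMeasure Q → klDiv Q P ≠ ⊤ →
      α ≤ (klDiv (m1 Q) (m1 P)).toReal →
        K + b * (klDiv (m2 Q) (m2 P)).toReal ≤ (klDiv Q P).toReal)
    (hb : 0 ≤ b) {B : Set X} (hB : MeasurableSet B)
    (hBα : m1 P B ≤ ENNReal.ofReal (Real.exp (-α))) {v : Y → ℝ≥0∞} (hv : Measurable v)
    (hv₁ : ∀ y, v y ≤ 1) :
    ∫⁻ z, B.indicator 1 z.1 * v z.2 ^ b ∂P
      ≤ ENNReal.ofReal (Real.exp (-K)) * (∫⁻ y, v y ∂m2 P) ^ b := by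
  by_cases hZ : ∫⁻ z, B.indicator 1 z.1 * v z.2 ^ b ∂P = 0
  · exact hZ ▸ zero_le
  obtain ⟨Q, hQ, hD, hB₀, hv₀, -, hiv, hQZ⟩ := exists_lintegral_mul_eq_ofReal_exp P
    (measurable_one.indicator hB) (hv.pow_const b)
    (fun x => indicator_le_self' (fun _ _ => zero_le) x)
    (fun y => ENNReal.rpow_le_one (hv₁ y) hb) hZ
  have hα : α ≤ (klDiv (m1 Q) (m1 P)).toReal := by
    have hexp := (ofReal_exp_neg_klDiv_le_measure (klDiv_m1_ne_top hD) hB hB₀).trans hBα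
    exact neg_le_neg_iff.1 (Real.exp_le_exp.1
      ((ENNReal.ofReal_le_ofReal_iff (Real.exp_pos _).le).1 hexp))
  rw [hQZ]
  refine le_trans ?_ (mul_le_mul' le_rfl
    (ofReal_exp_integral_log_rpow_sub_klDiv_le_rpow_lintegral (klDiv_m2_ne_top hD) hv hb hv₀ hiv))
  rw [← ENNReal.ofReal_mul (Real.exp_pos _).le, ← Real.exp_add]
  refine ENNReal.ofReal_le_ofReal (Real.exp_le_exp.2 ?_)
  simp only [log_toReal_indicator_one, integral_zero, zero_add]
  linarith [h Q hQ hD hα]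

/-! ### The reverse inequality in dimension one -/

section Pinched

variable {S : Type*} [MeasurableSpace S] {v : S → ℝ≥0∞} {m M : ℝ≥0}

lemma integrable_log_of_mem_Icc {Q : Measure S} [IsFiniteMeasure Q] (hv : Measurable v)
    (hm : 0 < m) (hvmM : ∀ y, v y ∈ Icc (m : ℝ≥0∞) M) :
    Integrable (fun y => Real.log (v y).toReal) Q := by
  refine .of_mem_Icc (Real.log m) (Real.log M) hv.ennreal_toReal.log.aemeasurable
    (.of_forall fun y => ?_)
  have hmv : (m : ℝ) ≤ (v y).toReal := by
    simpa using ENNReal.toReal_mono (ne_top_of_le_ne_top ENNReal.coe_ne_top (hvmM y).2) (hvmM y).1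
  have hvM : (v y).toReal ≤ M := ENNReal.toReal_le_coe_of_le_coe (hvmM y).2
  exact ⟨Real.log_le_log hm hmv, Real.log_le_log ((NNReal.coe_pos.2 hm).trans_le hmv) hvM⟩

lemma lintegral_mem_Icc (Q : Measure S) [IsProbabilityMeasure Q]
    (hvmM : ∀ y, v y ∈ Icc (m : ℝ≥0∞) M) : ∫⁻ y, v y ∂Q ∈ Icc (m : ℝ≥0∞) M :=
  ⟨by simpa using lintegral_mono (μ := Q) fun y => (hvmM y).1,
    by simpa using lintegral_mono (μ := Q) fun y => (hvmM y).2⟩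

end Pinched

lemma ne_zero_and_ne_top_of_mem_Icc {a : ℝ≥0∞} {m M : ℝ≥0} (hm : 0 < m)
    (ha : a ∈ Icc (m : ℝ≥0∞) M) : a ≠ 0 ∧ a ≠ ⊤ :=
  ⟨((ENNReal.coe_pos.2 hm).trans_le ha.1).ne', ne_top_of_le_ne_top ENNReal.coe_ne_top ha.2⟩

/-- Every law on the first factor extends to a law on the product which pays at most an affine
function of the relative entropy of the given marginal: the dual form of a reverse Brascamp–Lieb
inequality. The second marginal enters through its variational formula against `v` (with `v`
bounded away from `0` and `⊤`), which makes sense for both signs of `b`. -/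
def CouplingDivBound (P : Measure (X × Y)) (l b c : ℝ) : Prop :=
  ∀ QX : Measure X, IsProbabilityMeasure QX → klDiv QX (m1 P) ≠ ⊤ →
    ∀ (v : Y → ℝ≥0∞) (m M : ℝ≥0), Measurable v → 0 < m → (∀ y, v y ∈ Icc (m : ℝ≥0∞) M) →
      ∃ Q : Measure (X × Y), IsProbabilityMeasure Q ∧ m1 Q = QX ∧ klDiv Q P ≠ ⊤ ∧
        (klDiv Q P).toReal - b * ∫ y, Real.log (v y).toReal ∂m2 Q
          ≤ l * (klDiv QX (m1 P)).toReal + c - b * Real.log (∫⁻ y, v y ∂m2 P).toReal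

lemma log_toReal_rpow_mul_rpow {a d : ℝ≥0∞} (ha₀ : a ≠ 0) (ha : a ≠ ⊤) (hd₀ : d ≠ 0) (hd : d ≠ ⊤)
    (l b : ℝ) : Real.log (a ^ l * d ^ b).toReal
      = l * Real.log a.toReal + b * Real.log d.toReal := by
  rw [← log_toReal_rpow a, ← log_toReal_rpow d, ENNReal.toReal_mul, Real.log_mul]
  · simp [ENNReal.toReal_eq_zero_iff, ha₀, ha]
  · simp [ENNReal.toReal_eq_zero_iff, hd₀, hd]

lemma ofReal_exp_integral_log_sub_klDiv_le_lintegral_rpow_mul_rpow {Q P : Measure (X × Y)}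
    [IsProbabilityMeasure Q] [IsProbabilityMeasure P] (hQP : klDiv Q P ≠ ⊤) {u : X → ℝ≥0∞}
    {v : Y → ℝ≥0∞} (hu : Measurable u) (hv : Measurable v) (hu₀ : ∀ᵐ x ∂m1 Q, u x ≠ 0)
    (hu_top : ∀ x, u x ≠ ⊤) (hv₀ : ∀ y, v y ≠ 0 ∧ v y ≠ ⊤)
    (hlogu : Integrable (fun x => Real.log (u x).toReal) (m1 Q))
    (hlogv : Integrable (fun y => Real.log (v y).toReal) (m2 Q)) (l b : ℝ) :
    ENNReal.ofReal (Real.exp (l * ∫ x, Real.log (u x).toReal ∂m1 Q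
        + b * ∫ y, Real.log (v y).toReal ∂m2 Q - (klDiv Q P).toReal))
      ≤ ∫⁻ z, u z.1 ^ l * v z.2 ^ b ∂P := by
  set w : X × Y → ℝ≥0∞ := fun z => u z.1 ^ l * v z.2 ^ b
  have hw : Measurable w :=
    ((hu.comp measurable_fst).pow_const l).mul ((hv.comp measurable_snd).pow_const b)
  have hu₀' : ∀ᵐ z ∂Q, u z.1 ≠ 0 := ae_of_ae_map measurable_fst.aemeasurable hu₀
  have hw₀ : ∀ᵐ z ∂Q, w z ≠ 0 := hu₀'.mono fun z hz => by
    simp [w, hz, hu_top, (hv₀ z.2).1, (hv₀ z.2).2]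
  have hlog : (fun z => l * Real.log (u z.1).toReal + b * Real.log (v z.2).toReal)
      =ᵐ[Q] fun z => Real.log (w z).toReal :=
    hu₀'.mono fun z hz => (log_toReal_rpow_mul_rpow hz (hu_top _) (hv₀ _).1 (hv₀ _).2 l b).symm
  have hlogu' := (hlogu.comp_measurable measurable_fst).const_mul l
  have hlogv' := (hlogv.comp_measurable measurable_snd).const_mul b
  convert ofReal_exp_integral_log_sub_klDiv_le_lintegral hQP hw hw₀
    ((hlogu'.add hlogv').congr hlog) using 4
  rw [← integral_congr_ae hlog, m1, m2, integral_map measurable_fst.aemeasurable hlogu.1,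
    integral_map measurable_snd.aemeasurable hlogv.1, ← integral_const_mul, ← integral_const_mul]
  exact (integral_add hlogu' hlogv').symm

lemma CouplingDivBound.le_lintegral_rpow_mul_rpow {P : Measure (X × Y)} [IsProbabilityMeasure P]
    {l b c : ℝ} (h : CouplingDivBound P l b c) (hl : 0 < l) {u : X → ℝ≥0∞} {v : Y → ℝ≥0∞}
    {m M : ℝ≥0} (hu : Measurable u) (hv : Measurable v) (hu₁ : ∀ x, u x ≤ 1) (hm : 0 < m)
    (hvmM : ∀ y, v y ∈ Icc (m : ℝ≥0∞) M) :
    ENNReal.ofReal (Real.exp (-c)) * (∫⁻ x, u x ∂m1 P) ^ l * (∫⁻ y, v y ∂m2 P) ^ b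
      ≤ ∫⁻ z, u z.1 ^ l * v z.2 ^ b ∂P := by
  by_cases hU : ∫⁻ x, u x ∂m1 P = 0
  · simp [hU, ENNReal.zero_rpow_of_pos hl]
  have hu₁' : ∀ x, u x ≤ (1 : ℝ≥0) := by simpa using hu₁
  have hU_top := lintegral_ne_top_of_le_coe hu₁' (P := m1 P)
  obtain ⟨hV₀, hV_top⟩ := ne_zero_and_ne_top_of_mem_Icc hm (lintegral_mem_Icc (m2 P) hvmM)
  have := isProbabilityMeasure_tilt hu hU hU_top
  obtain ⟨Q, hQ, hQu, hD, hle⟩ := h _ this (klDiv_tilt_ne_top hu hu₁' hU) v m M hv hm hvmM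
  have hlog := integral_log_sub_klDiv_tilt hu hu₁' hU
  have hprod : ENNReal.ofReal (Real.exp (-c)) * (∫⁻ x, u x ∂m1 P) ^ l * (∫⁻ y, v y ∂m2 P) ^ b
      = ENNReal.ofReal (Real.exp (-c + (l * Real.log (∫⁻ x, u x ∂m1 P).toReal
        + b * Real.log (∫⁻ y, v y ∂m2 P).toReal))) := by
    rw [Real.exp_add, ENNReal.ofReal_mul (Real.exp_pos _).le,
      ← log_toReal_rpow_mul_rpow hU hU_top hV₀ hV_top, mul_assoc, ofReal_exp_log_toReal] <;>
    simp [hU, hU_top, hV₀, hV_top, ENNReal.mul_eq_top]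
  rw [hprod]
  refine le_trans (ENNReal.ofReal_le_ofReal (Real.exp_le_exp.2 ?_))
    (ofReal_exp_integral_log_sub_klDiv_le_lintegral_rpow_mul_rpow hD hu hv
      (hQu ▸ ae_tilt_ne_zero hu) (fun x => ne_top_of_le_ne_top ENNReal.one_ne_top (hu₁ x))
      (fun y => ne_zero_and_ne_top_of_mem_Icc hm (hvmM y))
      (hQu ▸ integrable_log_tilt hu hu₁' hU) (integrable_log_of_mem_Icc hv hm hvmM) l b)
  rw [hQu, ← hlog]
  linarith

/-! ### From the functions `φ` to the entropic inequalities -/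

section Phi

variable {P : Measure (X × Y)} [IsProbabilityMeasure P]

lemma divE_coe (t r : ℝ) : divE t (r : EReal) = ((r⁻¹ * t : ℝ) : EReal) := by
  simp [divE, div_eq_inv_mul]

lemma divE_conj (t q : ℝ) : divE t (conj q) = (((q - 1) / q * t : ℝ) : EReal) := by
  by_cases hq : q = 1
  · simp [divE, conj, hq]
  · rw [conj, if_neg hq, divE_coe, inv_div]

lemma phiRinf_le_klDiv_sub {Q : Measure (X × Y)} [IsProbabilityMeasure Q] (hQ : klDiv Q P ≠ ⊤)
    {r : EReal} {b : ℝ} (hr : ∀ t, divE t r = ((b * t : ℝ) : EReal)) :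
    phiRinf P r (klDiv (m1 Q) (m1 P)).toReal
      ≤ (((klDiv Q P).toReal - b * (klDiv (m2 Q) (m2 P)).toReal : ℝ) : EReal) := by
  have h₁ := klDiv_m1_ne_top hQ
  have h₂ := klDiv_m2_ne_top hQ
  refine (iInf₂_le (klDiv (m2 Q) (m2 P)).toReal ENNReal.toReal_nonneg).trans ?_
  rw [hr, EReal.coe_sub]
  refine EReal.sub_le_sub ?_ le_rfl
  calc phiL P (klDiv (m1 Q) (m1 P)).toReal (klDiv (m2 Q) (m2 P)).toReal
    _ ≤ Dmin (m1 Q) (m2 Q) P :=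
        (iInf₂_le (m1 Q) (m2 Q)).trans <|
          (iInf₂_le (isProbabilityMeasure_m1 Q) (isProbabilityMeasure_m2 Q)).trans <|
          (iInf₂_le (klDiv_ne_top_iff.1 h₁).1 (klDiv_ne_top_iff.1 h₂).1).trans <|
            iInf₂_le (KL_eq_coe_toReal h₁) (KL_eq_coe_toReal h₂)
    _ ≤ KL Q P := iInf₂_le Q ⟨inferInstance, rfl, rfl⟩
    _ = ((klDiv Q P).toReal : EReal) := KL_eq_coe_toReal hQ

lemma Dmin_nonneg (QX : Measure X) (QY : Measure Y) : 0 ≤ Dmin QX QY P :=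
  le_iInf₂ fun _ hQ => have := hQ.1; KL_nonneg

lemma exists_klDiv_lt_of_Dmin_lt {QX : Measure X} {QY : Measure Y} {a : ℝ}
    (h : Dmin QX QY P < (a : EReal)) :
    ∃ Q : Measure (X × Y), IsProbabilityMeasure Q ∧ m1 Q = QX ∧ m2 Q = QY ∧ klDiv Q P ≠ ⊤ ∧
      (klDiv Q P).toReal < a := by
  simp only [Dmin, iInf_lt_iff] at h
  obtain ⟨Q, ⟨hQ, hQX, hQY⟩, hlt⟩ := h
  have hQP := klDiv_ne_top_of_KL_ne_top (hlt.trans (EReal.coe_lt_top a)).ne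
  rw [KL_eq_coe_toReal hQP, EReal.coe_lt_coe_iff] at hlt
  exact ⟨Q, hQ, hQX, hQY, hQP, hlt⟩

lemma Dmin_le_phiU {QX : Measure X} {QY : Measure Y} [IsProbabilityMeasure QX]
    [IsProbabilityMeasure QY] (hQX : klDiv QX (m1 P) ≠ ⊤) (hQY : klDiv QY (m2 P) ≠ ⊤) :
    Dmin QX QY P ≤ phiU P (klDiv QX (m1 P)).toReal (klDiv QY (m2 P)).toReal :=
  le_iSup₂_of_le QX QY <| le_iSup₂_of_le inferInstance inferInstance <|
    le_iSup₂_of_le (klDiv_ne_top_iff.1 hQX).1 (klDiv_ne_top_iff.1 hQY).1 <|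
      le_iSup₂_of_le (KL_eq_coe_toReal hQX) (KL_eq_coe_toReal hQY) le_rfl

lemma phiSupR_zero_nonneg (r : ℝ) : 0 ≤ phiSupR P r 0 := by
  have h : Dmin (m1 P) (m2 P) P ≤ phiU P 0 0 := by
    simpa using Dmin_le_phiU (P := P) (QX := m1 P) (QY := m2 P) (by simp) (by simp)
  refine le_iSup₂_of_le (0 : ℝ) le_rfl ?_
  simpa [divE] using (Dmin_nonneg _ _).trans h

lemma ediv_nonpos {x : EReal} (hx : 0 ≤ x) {r : ℝ} (hr : r < 0) : ediv x r ≤ 0 := by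
  rw [ediv, if_neg hr.ne]
  exact mul_nonpos_of_nonneg_of_nonpos hx (EReal.coe_nonpos.2 (inv_nonpos.2 hr.le))

lemma phiNeg_zero_nonneg {r : ℝ} (hr : r < 0) : 0 ≤ phiNeg P r 0 := by
  refine le_iSup₂_of_le (m1 P) inferInstance (le_iSup₂_of_le Measure.AbsolutelyContinuous.rfl
    (by simpa using KL_self (m1 P)) (le_iInf₂ fun QY hQY => le_iInf fun _ => ?_))
  have hle : ediv (KL QY (m2 P)) r ≤ 0 := ediv_nonpos KL_nonneg hr
  have hD := EReal.bot_lt_zero.trans_le (Dmin_nonneg (P := P) (m1 P) QY)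
  exact (EReal.sub_nonneg (.inr (hle.trans_lt EReal.zero_lt_top).ne) (.inl hD.ne')).2
    (hle.trans (Dmin_nonneg _ _))

lemma phiLT1_zero_ne_bot (r : ℝ) (hr : r ≠ 0) : phiLT1 P r 0 ≠ ⊥ := by
  have h : 0 ≤ phiLT1 P r 0 := by
    unfold phiLT1
    split_ifs with h
    · exact phiSupR_zero_nonneg r
    · exact phiNeg_zero_nonneg ((not_lt.1 h).lt_of_ne hr)
  exact (EReal.bot_lt_zero.trans_le h).ne'

lemma Dmin_lt_of_phiSupR_lt {QX : Measure X} {QY : Measure Y} [IsProbabilityMeasure QX]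
    [IsProbabilityMeasure QY] (hQX : klDiv QX (m1 P) ≠ ⊤) (hQY : klDiv QY (m2 P) ≠ ⊤) {r a : ℝ}
    (h : phiSupR P r (klDiv QX (m1 P)).toReal < (a : EReal)) :
    Dmin QX QY P < ((a + r⁻¹ * (klDiv QY (m2 P)).toReal : ℝ) : EReal) := by
  have hlt := (le_iSup₂_of_le (klDiv QY (m2 P)).toReal ENNReal.toReal_nonneg le_rfl).trans_lt h
  rw [divE_coe, EReal.sub_lt_iff (.inl (EReal.coe_ne_bot _)) (.inl (EReal.coe_ne_top _)),
    ← EReal.coe_add] at hlt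
  exact (Dmin_le_phiU hQX hQY).trans_lt hlt

lemma couplingDivBound_of_phiSupR_lt {r l c : ℝ}
    (h : ∀ s : ℝ, 0 ≤ s → phiSupR P r s < ((l * s + c : ℝ) : EReal)) :
    CouplingDivBound P l r⁻¹ c := by
  intro QX hQX hQXP v m M hv hm hvmM
  have hvM : ∀ y, v y ≤ M := fun y => (hvmM y).2
  obtain ⟨hV₀, hV_top⟩ := ne_zero_and_ne_top_of_mem_Icc hm (lintegral_mem_Icc (m2 P) hvmM)
  have := isProbabilityMeasure_tilt hv hV₀ hV_top
  obtain ⟨Q, hQ, hQ₁, hQ₂, hQP, hlt⟩ := exists_klDiv_lt_of_Dmin_lt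
    (Dmin_lt_of_phiSupR_lt hQXP (klDiv_tilt_ne_top hv hvM hV₀) (h _ ENNReal.toReal_nonneg))
  refine ⟨Q, hQ, hQ₁, hQP, ?_⟩
  rw [hQ₂, ← integral_log_sub_klDiv_tilt hv hvM hV₀]
  linarith

lemma exists_klDiv_lt_of_phiNeg_lt {r : ℝ} (hr : r < 0) {QX : Measure X} [IsProbabilityMeasure QX]
    (hQX : klDiv QX (m1 P) ≠ ⊤) {a : ℝ}
    (h : phiNeg P r (klDiv QX (m1 P)).toReal < (a : EReal)) :
    ∃ Q : Measure (X × Y), IsProbabilityMeasure Q ∧ m1 Q = QX ∧ klDiv Q P ≠ ⊤ ∧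
      (klDiv Q P).toReal < a + r⁻¹ * (klDiv (m2 Q) (m2 P)).toReal := by
  have hlt := (le_iSup₂_of_le QX ‹_› <|
    le_iSup₂_of_le (klDiv_ne_top_iff.1 hQX).1 (KL_eq_coe_toReal hQX) le_rfl).trans_lt h
  simp only [iInf_lt_iff] at hlt
  obtain ⟨QY, hQY, -, hlt⟩ := hlt
  by_cases hKL : KL QY (m2 P) = ⊤
  · rw [hKL, ediv, if_neg hr.ne, EReal.top_mul_coe_of_neg (inv_lt_zero.2 hr), EReal.sub_bot
      (EReal.bot_lt_zero.trans_le (Dmin_nonneg _ _)).ne'] at hlt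
    exact absurd hlt not_top_lt
  have hQYP := klDiv_ne_top_of_KL_ne_top hKL
  rw [KL_eq_coe_toReal hQYP, ediv, if_neg hr.ne, ← EReal.coe_mul, EReal.sub_lt_iff
    (.inl (EReal.coe_ne_bot _)) (.inl (EReal.coe_ne_top _)), ← EReal.coe_add] at hlt
  obtain ⟨Q, hQ, hQ₁, rfl, hQP, hlt⟩ := exists_klDiv_lt_of_Dmin_lt hlt
  exact ⟨Q, hQ, hQ₁, hQP, by linarith⟩

lemma couplingDivBound_of_phiNeg_lt {r l c : ℝ} (hr : r < 0)
    (h : ∀ s : ℝ, 0 ≤ s → phiNeg P r s < ((l * s + c : ℝ) : EReal)) :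
    CouplingDivBound P l r⁻¹ c := by
  intro QX hQX hQXP v m M hv hm hvmM
  obtain ⟨Q, hQ, hQ₁, hQP, hlt⟩ := exists_klDiv_lt_of_phiNeg_lt hr hQXP
    (h _ ENNReal.toReal_nonneg)
  refine ⟨Q, hQ, hQ₁, hQP, ?_⟩
  have hDV := integral_log_sub_klDiv_le_log_lintegral (klDiv_m2_ne_top hQP) hv
    (.of_forall fun y => (ne_zero_and_ne_top_of_mem_Icc hm (hvmM y)).1)
    (integrable_log_of_mem_Icc hv hm hvmM)
    (ne_zero_and_ne_top_of_mem_Icc hm (lintegral_mem_Icc (m2 P) hvmM)).2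
  linarith [mul_le_mul_of_nonpos_left hDV (inv_nonpos.2 hr.le)]

lemma couplingDivBound_of_phiLT1_lt {r l c : ℝ} (hr : r ≠ 0)
    (h : ∀ s : ℝ, 0 ≤ s → phiLT1 P r s < ((l * s + c : ℝ) : EReal)) :
    CouplingDivBound P l r⁻¹ c := by
  unfold phiLT1 at h
  split_ifs at h with h₀
  · exact couplingDivBound_of_phiSupR_lt h
  · exact couplingDivBound_of_phiNeg_lt ((not_lt.1 h₀).lt_of_ne hr) h

end Phi

/-! ### Tensorization -/

section PowerMeasure

variable {Ω : Type*} [MeasurableSpace Ω] (μ : Measure Ω) [IsProbabilityMeasure μ] {n : ℕ}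

instance isProbabilityMeasure_piM (n : ℕ) : IsProbabilityMeasure (piM n μ) := by
  unfold piM; infer_instance

/-- The fibre of a set of `(n + 1)`-tuples over its first coordinate. -/
def consFiber (A : Set (Fin (n + 1) → Ω)) (a : Ω) : Set (Fin n → Ω) := {z | Fin.cons a z ∈ A}

lemma measurable_cons :
    Measurable fun p : Ω × (Fin n → Ω) => (Fin.cons p.1 p.2 : Fin (n + 1) → Ω) := by
  refine measurable_pi_lambda _ (Fin.cases ?_ fun j => ?_)
  · simpa only [Fin.cons_zero] using measurable_fst
  · simp only [Fin.cons_succ]; fun_prop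

lemma measurable_cons_left (a : Ω) :
    Measurable fun z : Fin n → Ω => (Fin.cons a z : Fin (n + 1) → Ω) :=
  measurable_cons.comp measurable_prodMk_left

lemma measurableSet_consFiber {A : Set (Fin (n + 1) → Ω)} (hA : MeasurableSet A) (a : Ω) :
    MeasurableSet (consFiber A a) :=
  measurable_cons_left a hA

lemma lintegral_piM_zero (g : (Fin 0 → Ω) → ℝ≥0∞) : ∫⁻ z, g z ∂piM 0 μ = g default := by
  rw [lintegral_unique, measure_univ, mul_one]

lemma lintegral_piM_succ {g : (Fin (n + 1) → Ω) → ℝ≥0∞} (hg : Measurable g) :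
    ∫⁻ z, g z ∂piM (n + 1) μ = ∫⁻ a, ∫⁻ z, g (Fin.cons a z) ∂piM n μ ∂μ := by
  have h := (measurePreserving_piFinSuccAbove (fun _ : Fin (n + 1) => μ) 0).symm
  rw [piM, ← h.lintegral_comp hg, lintegral_prod]
  · simp only [piM, MeasurableEquiv.piFinSuccAbove, Fin.insertNthEquiv_zero]
    rfl
  · exact (hg.comp h.measurable).aemeasurable

lemma measurable_lintegral_cons {g : (Fin (n + 1) → Ω) → ℝ≥0∞} (hg : Measurable g) :
    Measurable fun a => ∫⁻ z, g (Fin.cons a z) ∂piM n μ :=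
  (hg.comp measurable_cons).lintegral_prod_right'

lemma measurable_piM_consFiber {A : Set (Fin (n + 1) → Ω)} (hA : MeasurableSet A) :
    Measurable fun a => piM n μ (consFiber A a) :=
  measurable_measure_prodMk_left (measurable_cons hA)

lemma piM_succ_apply {A : Set (Fin (n + 1) → Ω)} (hA : MeasurableSet A) :
    piM (n + 1) μ A = ∫⁻ a, piM n μ (consFiber A a) ∂μ := by
  rw [← lintegral_indicator_one hA, lintegral_piM_succ μ (measurable_one.indicator hA)]
  refine lintegral_congr fun a => ?_
  rw [← lintegral_indicator_one (measurableSet_consFiber hA a)]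
  rfl

end PowerMeasure

lemma measurable_fstv {n : ℕ} : Measurable (fstv : (Fin n → X × Y) → Fin n → X) := by
  unfold fstv; fun_prop

lemma measurable_sndv {n : ℕ} : Measurable (sndv : (Fin n → X × Y) → Fin n → Y) := by
  unfold sndv; fun_prop

lemma measurePreserving_fstv (P : Measure (X × Y)) [IsProbabilityMeasure P] (n : ℕ) :
    MeasurePreserving fstv (piM n P) (piM n (m1 P)) :=
  measurePreserving_pi (fun _ => P) (fun _ => m1 P) fun _ => ⟨measurable_fst, rfl⟩

section Cons

variable {S T : Type*} {n : ℕ}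

lemma fstv_cons (a : S × T) (z : Fin n → S × T) :
    fstv (Fin.cons a z : Fin (n + 1) → S × T) = Fin.cons a.1 (fstv z) := by
  funext i; cases i using Fin.cases <;> simp [fstv]

lemma sndv_cons (a : S × T) (z : Fin n → S × T) :
    sndv (Fin.cons a z : Fin (n + 1) → S × T) = Fin.cons a.2 (sndv z) := by
  funext i; cases i using Fin.cases <;> simp [sndv]

end Cons

section Tensorization

variable {P : Measure (X × Y)} [IsProbabilityMeasure P] {l b c : ℝ} {n : ℕ}

lemma lintegral_fstv_mul_sndv_succ {f : (Fin (n + 1) → X) → ℝ≥0∞} {g : (Fin (n + 1) → Y) → ℝ≥0∞}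
    (hf : Measurable f) (hg : Measurable g) :
    ∫⁻ z, f (fstv z) * g (sndv z) ∂piM (n + 1) P = ∫⁻ a,
      ∫⁻ z, f (Fin.cons a.1 (fstv z)) * g (Fin.cons a.2 (sndv z)) ∂piM n P ∂P := by
  have hfg : Measurable fun z : Fin (n + 1) → X × Y => f (fstv z) * g (sndv z) :=
    (hf.comp measurable_fstv).mul (hg.comp measurable_sndv)
  rw [lintegral_piM_succ P hfg]
  simp only [fstv_cons, sndv_cons]

lemma MarginalDivBound.lintegral_piM_le (h : MarginalDivBound P l b c) (hl : 0 ≤ l) (hb : 0 ≤ b)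
    {u : (Fin n → X) → ℝ≥0∞} {v : (Fin n → Y) → ℝ≥0∞} (hu : Measurable u) (hv : Measurable v)
    (hu₁ : ∀ x, u x ≤ 1) (hv₁ : ∀ y, v y ≤ 1) :
    ∫⁻ z, u (fstv z) ^ l * v (sndv z) ^ b ∂piM n P ≤ ENNReal.ofReal (Real.exp (-c)) ^ n
      * (∫⁻ x, u x ∂piM n (m1 P)) ^ l * (∫⁻ y, v y ∂piM n (m2 P)) ^ b := by
  induction n with
  | zero =>
    simp only [lintegral_piM_zero, pow_zero, one_mul]
    rw [Subsingleton.elim (fstv default) default, Subsingleton.elim (sndv default) default]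
  | succ n ih =>
    set C := ENNReal.ofReal (Real.exp (-c))
    set U : X → ℝ≥0∞ := fun a => ∫⁻ x, u (Fin.cons a x) ∂piM n (m1 P)
    set V : Y → ℝ≥0∞ := fun a => ∫⁻ y, v (Fin.cons a y) ∂piM n (m2 P)
    have hU : Measurable U := measurable_lintegral_cons _ hu
    have hV : Measurable V := measurable_lintegral_cons _ hv
    rw [lintegral_fstv_mul_sndv_succ (hu.pow_const l) (hv.pow_const b),
      lintegral_piM_succ _ hu, lintegral_piM_succ _ hv]
    calc ∫⁻ a, ∫⁻ z, u (Fin.cons a.1 (fstv z)) ^ l * v (Fin.cons a.2 (sndv z)) ^ b ∂piM n P ∂P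
      _ ≤ ∫⁻ a, C ^ n * (U a.1 ^ l * V a.2 ^ b) ∂P := lintegral_mono fun a => by
          rw [← mul_assoc]
          exact ih (hu.comp (measurable_cons_left _))
            (hv.comp (measurable_cons_left _)) (fun _ => hu₁ _) (fun _ => hv₁ _)
      _ = C ^ n * ∫⁻ a, U a.1 ^ l * V a.2 ^ b ∂P := lintegral_const_mul _
          (((hU.comp measurable_fst).pow_const l).mul ((hV.comp measurable_snd).pow_const b))
      _ ≤ C ^ n * (C * (∫⁻ x, U x ∂m1 P) ^ l * (∫⁻ y, V y ∂m2 P) ^ b) := by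
          gcongr
          exact h.lintegral_rpow_mul_rpow_le hl hb hU hV
            (fun _ => (lintegral_mono fun _ => hu₁ _).trans (by simp))
            (fun _ => (lintegral_mono fun _ => hv₁ _).trans (by simp))
      _ = C ^ (n + 1) * (∫⁻ x, U x ∂m1 P) ^ l * (∫⁻ y, V y ∂m2 P) ^ b := by ring

lemma CouplingDivBound.le_lintegral_piM (h : CouplingDivBound P l b c) (hl : 0 < l)
    {u : (Fin n → X) → ℝ≥0∞} {v : (Fin n → Y) → ℝ≥0∞} {m M : ℝ≥0} (hu : Measurable u)
    (hv : Measurable v) (hu₁ : ∀ x, u x ≤ 1) (hm : 0 < m) (hvmM : ∀ y, v y ∈ Icc (m : ℝ≥0∞) M) :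
    ENNReal.ofReal (Real.exp (-c)) ^ n * (∫⁻ x, u x ∂piM n (m1 P)) ^ l
      * (∫⁻ y, v y ∂piM n (m2 P)) ^ b ≤ ∫⁻ z, u (fstv z) ^ l * v (sndv z) ^ b ∂piM n P := by
  induction n with
  | zero =>
    simp only [lintegral_piM_zero, pow_zero, one_mul]
    rw [Subsingleton.elim (fstv default) default, Subsingleton.elim (sndv default) default]
  | succ n ih =>
    set C := ENNReal.ofReal (Real.exp (-c))
    set U : X → ℝ≥0∞ := fun a => ∫⁻ x, u (Fin.cons a x) ∂piM n (m1 P)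
    set V : Y → ℝ≥0∞ := fun a => ∫⁻ y, v (Fin.cons a y) ∂piM n (m2 P)
    have hU : Measurable U := measurable_lintegral_cons _ hu
    have hV : Measurable V := measurable_lintegral_cons _ hv
    rw [lintegral_fstv_mul_sndv_succ (hu.pow_const l) (hv.pow_const b),
      lintegral_piM_succ _ hu, lintegral_piM_succ _ hv]
    calc C ^ (n + 1) * (∫⁻ x, U x ∂m1 P) ^ l * (∫⁻ y, V y ∂m2 P) ^ b
      _ = C ^ n * (C * (∫⁻ x, U x ∂m1 P) ^ l * (∫⁻ y, V y ∂m2 P) ^ b) := by ring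
      _ ≤ C ^ n * ∫⁻ a, U a.1 ^ l * V a.2 ^ b ∂P := by
          gcongr
          exact h.le_lintegral_rpow_mul_rpow hl hU hV
            (fun _ => (lintegral_mono fun _ => hu₁ _).trans (by simp)) hm
            (fun _ => lintegral_mem_Icc _ fun _ => hvmM _)
      _ = ∫⁻ a, C ^ n * (U a.1 ^ l * V a.2 ^ b) ∂P := (lintegral_const_mul _
          (((hU.comp measurable_fst).pow_const l).mul ((hV.comp measurable_snd).pow_const b))).symm
      _ ≤ ∫⁻ a, ∫⁻ z, u (Fin.cons a.1 (fstv z)) ^ l * v (Fin.cons a.2 (sndv z)) ^ b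
            ∂piM n P ∂P := lintegral_mono fun a => by
          rw [← mul_assoc]
          exact ih (hu.comp (measurable_cons_left _))
            (hv.comp (measurable_cons_left _)) (fun _ => hu₁ _)
            (fun _ => hvmM _)

end Tensorization

section MinimalMass

variable {p : ℝ≥0∞} {n : ℕ}

section Fibers

variable {Ω : Type*} [MeasurableSpace Ω] {μ : Measure Ω} [IsProbabilityMeasure μ]

lemma pow_mul_measure_le_piM_succ (hp : ∀ A : Set (Fin n → Ω), MeasurableSet A →
      piM n μ A ≠ 0 → p ^ n ≤ piM n μ A) {A : Set (Fin (n + 1) → Ω)} (hA : MeasurableSet A) :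
    p ^ n * μ {a | piM n μ (consFiber A a) ≠ 0} ≤ piM (n + 1) μ A := by
  have hB : MeasurableSet {a | piM n μ (consFiber A a) ≠ 0} :=
    measurable_piM_consFiber μ hA (measurableSet_singleton 0).compl
  rw [piM_succ_apply μ hA, ← lintegral_indicator_const hB]
  exact lintegral_mono fun a =>
    indicator_le' (fun a ha => hp _ (measurableSet_consFiber hA a) ha) (fun _ _ => zero_le) a

lemma pow_le_piM_of_ne_zero (hp : ∀ B, MeasurableSet B → μ B ≠ 0 → p ≤ μ B)
    {A : Set (Fin n → Ω)} (hA : MeasurableSet A) (hA₀ : piM n μ A ≠ 0) : p ^ n ≤ piM n μ A := by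
  induction n with
  | zero =>
    obtain ⟨z, hz⟩ := nonempty_of_measure_ne_zero hA₀
    rw [Subsingleton.eq_univ_of_nonempty ⟨z, hz⟩, measure_univ, pow_zero]
  | succ n ih =>
    have hB₀ : μ {a | piM n μ (consFiber A a) ≠ 0} ≠ 0 := by
      rw [piM_succ_apply μ hA, Ne, lintegral_eq_zero_iff (measurable_piM_consFiber μ hA)] at hA₀
      exact hA₀
    calc p ^ (n + 1) ≤ p ^ n * μ {a | piM n μ (consFiber A a) ≠ 0} := by
          rw [pow_succ]
          gcongr
          exact hp _ (measurable_piM_consFiber μ hA (measurableSet_singleton 0).compl) hB₀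
      _ ≤ piM (n + 1) μ A := pow_mul_measure_le_piM_succ (fun A => ih) hA

variable {A : Set (Fin (n + 1) → Ω)}

lemma measure_setOf_piM_consFiber_ne_zero_le (hp₀ : p ≠ 0) (hp_top : p ≠ ⊤)
    (hp : ∀ B, MeasurableSet B → μ B ≠ 0 → p ≤ μ B) (hA : MeasurableSet A)
    (hAp : piM (n + 1) μ A ≤ p ^ (n + 1)) : μ {a | piM n μ (consFiber A a) ≠ 0} ≤ p := by
  have h := (pow_mul_measure_le_piM_succ (fun _ => pow_le_piM_of_ne_zero hp) hA).trans hAp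
  rw [pow_succ] at h
  exact (ENNReal.mul_le_mul_iff_right (pow_ne_zero n hp₀) (ENNReal.pow_ne_top hp_top)).1 h

lemma ae_piM_consFiber_le_pow (hp_top : p ≠ ⊤) (hp : ∀ B, MeasurableSet B → μ B ≠ 0 → p ≤ μ B)
    (hA : MeasurableSet A) (hAp : piM (n + 1) μ A ≤ p ^ (n + 1)) :
    ∀ᵐ a ∂μ, piM n μ (consFiber A a) ≤ p ^ n := by
  set B := {a | piM n μ (consFiber A a) ≠ 0}
  have hB : MeasurableSet B := measurable_piM_consFiber μ hA (measurableSet_singleton 0).compl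
  by_cases hB₀ : μ B = 0
  · filter_upwards [measure_eq_zero_iff_ae_notMem.1 hB₀] with a ha
    rw [not_not.1 ha]
    exact zero_le
  -- `pⁿ 1_B` is below the fibre masses, with at least the same integral, so they agree a.e.
  have hle : (B.indicator fun _ => p ^ n) ≤ fun a => piM n μ (consFiber A a) :=
    indicator_le' (fun a ha => pow_le_piM_of_ne_zero hp (measurableSet_consFiber hA a) ha)
      fun _ _ => zero_le
  have hint : ∫⁻ a, piM n μ (consFiber A a) ∂μ ≤ ∫⁻ a, B.indicator (fun _ => p ^ n) a ∂μ := by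
    rw [← piM_succ_apply μ hA, lintegral_indicator_const hB]
    exact hAp.trans (by rw [pow_succ]; gcongr; exact hp B hB hB₀)
  have hfin : ∫⁻ a, B.indicator (fun _ => p ^ n) a ∂μ ≠ ⊤ := by
    rw [lintegral_indicator_const hB]
    exact ENNReal.mul_ne_top (ENNReal.pow_ne_top hp_top) (measure_ne_top _ _)
  filter_upwards [ae_eq_of_ae_le_of_lintegral_le (ae_of_all _ hle) hfin
    (measurable_piM_consFiber μ hA).aemeasurable hint] with a ha
  rw [← ha]
  exact indicator_le_self' (fun _ _ => zero_le) a

end Fibers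

lemma lintegral_piM_indicator_mul_rpow_le {P : Measure (X × Y)} [IsProbabilityMeasure P]
    {C : ℝ≥0∞} {b : ℝ} (hp₀ : p ≠ 0) (hp_top : p ≠ ⊤)
    (hp : ∀ B, MeasurableSet B → m1 P B ≠ 0 → p ≤ m1 P B)
    (hC : ∀ (B : Set X) (v : Y → ℝ≥0∞), MeasurableSet B → m1 P B ≤ p → Measurable v →
      (∀ y, v y ≤ 1) → ∫⁻ z, B.indicator 1 z.1 * v z.2 ^ b ∂P ≤ C * (∫⁻ y, v y ∂m2 P) ^ b)
    {A : Set (Fin n → X)} {v : (Fin n → Y) → ℝ≥0∞} (hA : MeasurableSet A)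
    (hAp : piM n (m1 P) A ≤ p ^ n) (hv : Measurable v) (hv₁ : ∀ y, v y ≤ 1) :
    ∫⁻ z, A.indicator 1 (fstv z) * v (sndv z) ^ b ∂piM n P
      ≤ C ^ n * (∫⁻ y, v y ∂piM n (m2 P)) ^ b := by
  induction n with
  | zero =>
    simp only [lintegral_piM_zero, pow_zero, one_mul]
    rw [Subsingleton.elim (sndv default) default]
    exact mul_le_of_le_one_left' (indicator_le_self _ _ _)
  | succ n ih =>
    set B := {a | piM n (m1 P) (consFiber A a) ≠ 0}
    set V : Y → ℝ≥0∞ := fun a => ∫⁻ y, v (Fin.cons a y) ∂piM n (m2 P)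
    have hB : MeasurableSet B :=
      measurable_piM_consFiber _ hA (measurableSet_singleton 0).compl
    have hV : Measurable V := measurable_lintegral_cons _ hv
    have hfiber : ∀ᵐ a ∂P, ∫⁻ z, (consFiber A a.1).indicator 1 (fstv z)
        * v (Fin.cons a.2 (sndv z)) ^ b ∂piM n P ≤ C ^ n * (B.indicator 1 a.1 * V a.2 ^ b) := by
      have hmass : ∀ᵐ a ∂m1 P, piM n (m1 P) (consFiber A a) ≤ p ^ n :=
        ae_piM_consFiber_le_pow hp_top hp hA hAp
      filter_upwards [ae_of_ae_map measurable_fst.aemeasurable hmass] with a ha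
      by_cases haB : a.1 ∈ B
      · rw [indicator_of_mem haB, Pi.one_apply, one_mul]
        exact ih (measurableSet_consFiber hA _) ha (hv.comp (measurable_cons_left _))
          fun _ => hv₁ _
      · refine (lintegral_eq_zero_of_ae_eq_zero ?_).trans_le (zero_le)
        filter_upwards [(measurePreserving_fstv P n).quasiMeasurePreserving.ae
          (measure_eq_zero_iff_ae_notMem.1 (not_not.1 haB))] with z hz
        rw [indicator_of_notMem hz, zero_mul, Pi.zero_apply]
    rw [lintegral_fstv_mul_sndv_succ (measurable_one.indicator hA) (hv.pow_const b),
      lintegral_piM_succ _ hv]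
    calc ∫⁻ a, ∫⁻ z, (consFiber A a.1).indicator 1 (fstv z)
          * v (Fin.cons a.2 (sndv z)) ^ b ∂piM n P ∂P
      _ ≤ ∫⁻ a, C ^ n * (B.indicator 1 a.1 * V a.2 ^ b) ∂P := lintegral_mono_ae hfiber
      _ = C ^ n * ∫⁻ a, B.indicator 1 a.1 * V a.2 ^ b ∂P := lintegral_const_mul _
          (((measurable_one.indicator hB).comp measurable_fst).mul
            ((hV.comp measurable_snd).pow_const b))
      _ ≤ C ^ n * (C * (∫⁻ y, V y ∂m2 P) ^ b) := by
          gcongr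
          exact hC B V hB (measure_setOf_piM_consFiber_ne_zero_le hp₀ hp_top hp hA hAp) hV
            fun _ => (lintegral_mono fun _ => hv₁ _).trans (by simp)
      _ = C ^ (n + 1) * (∫⁻ y, V y ∂m2 P) ^ b := by ring

end MinimalMass

/-! ### Product kernels and disintegration -/

section ProductKernel

variable {P : Measure (X × Y)} [IsProbabilityMeasure P] {κ : Kernel Y X} [IsMarkovKernel κ] {n : ℕ}

instance isProbabilityMeasure_kpi (κ : Kernel Y X) [IsMarkovKernel κ] (y : Fin n → Y) :
    IsProbabilityMeasure (kpi κ y) := by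
  unfold kpi; infer_instance

lemma measurable_kpi (κ : Kernel Y X) [IsMarkovKernel κ] (n : ℕ) :
    Measurable fun y : Fin n → Y => kpi κ y := by
  refine Measurable.measure_of_isPiSystem_of_isProbabilityMeasure generateFrom_pi.symm
    isPiSystem_pi ?_
  rintro s ⟨t, ht, rfl⟩
  simp only [kpi, Measure.pi_pi]
  exact Finset.measurable_prod _ fun i _ =>
    (Kernel.measurable_coe κ (ht i (mem_univ i))).comp (measurable_pi_apply i)

lemma measurable_kpi_apply (κ : Kernel Y X) [IsMarkovKernel κ] {A : Set (Fin n → X)}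
    (hA : MeasurableSet A) : Measurable fun y : Fin n → Y => kpi κ y A :=
  (Measure.measurable_coe hA).comp (measurable_kpi κ n)

/-- The `n`-fold product of a Markov kernel, bundling `kpi`. -/
def piKernel (κ : Kernel Y X) [IsMarkovKernel κ] (n : ℕ) : Kernel (Fin n → Y) (Fin n → X) :=
  ⟨fun y => kpi κ y, measurable_kpi κ n⟩

instance isMarkovKernel_piKernel (κ : Kernel Y X) [IsMarkovKernel κ] (n : ℕ) :
    IsMarkovKernel (piKernel κ n) :=
  ⟨fun y => isProbabilityMeasure_kpi κ y⟩

lemma IsCondKernel.eq_map_swap_compProd (hκ : IsCondKernel P κ) :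
    P = ((m2 P) ⊗ₘ κ).map Prod.swap := by
  refine Measure.ext_prod fun {s t} hs ht => ?_
  rw [Measure.map_apply measurable_swap (hs.prod ht), preimage_swap_prod,
    Measure.compProd_apply_prod ht hs, hκ s t hs ht]

lemma IsCondKernel.apply_eq_lintegral (hκ : IsCondKernel P κ) {s : Set (X × Y)}
    (hs : MeasurableSet s) : P s = ∫⁻ y, κ y {x | (x, y) ∈ s} ∂m2 P := by
  conv_lhs => rw [hκ.eq_map_swap_compProd]
  rw [Measure.map_apply measurable_swap hs, Measure.compProd_apply (measurable_swap hs)]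
  rfl

lemma lintegral_piM_prod {Ω : Type*} [MeasurableSpace Ω] (μ : Measure Ω) [IsProbabilityMeasure μ]
    {g : Fin n → Ω → ℝ≥0∞} (hg : ∀ i, Measurable (g i)) :
    ∫⁻ z, ∏ i, g i (z i) ∂piM n μ = ∏ i, ∫⁻ a, g i a ∂μ := by
  unfold piM
  rw [lintegral_prod_eq_prod_lintegral_of_indepFun _ (fun i (z : Fin n → Ω) => g i (z i))
    (iIndepFun_pi fun i => (hg i).aemeasurable) fun i => (hg i).comp (measurable_pi_apply i)]
  exact Finset.prod_congr rfl fun i _ =>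
    (measurePreserving_eval (fun _ : Fin n => μ) i).lintegral_comp (hg i)

lemma IsCondKernel.piM_eq_map_compProd (hκ : IsCondKernel P κ) (n : ℕ) :
    piM n P = ((piM n (m2 P)) ⊗ₘ (piKernel κ n)).map fun p i => (p.2 i, p.1 i) := by
  have hm : Measurable fun (p : (Fin n → Y) × (Fin n → X)) (i : Fin n) => (p.2 i, p.1 i) := by
    fun_prop
  refine Measure.pi_eq fun s hs => ?_
  have hbox (y : Fin n → Y) : piKernel κ n y {x | (fun i => (x i, y i)) ∈ univ.pi s}
      = ∏ i, κ (y i) {x | (x, y i) ∈ s i} := by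
    rw [← Measure.pi_pi]
    rfl
  rw [Measure.map_apply hm (MeasurableSet.univ_pi hs),
    Measure.compProd_apply (hm (MeasurableSet.univ_pi hs))]
  calc ∫⁻ y, piKernel κ n y {x | (fun i => (x i, y i)) ∈ univ.pi s} ∂piM n (m2 P)
    _ = ∫⁻ y, ∏ i, κ (y i) {x | (x, y i) ∈ s i} ∂piM n (m2 P) := lintegral_congr hbox
    _ = ∏ i, ∫⁻ y, κ y {x | (x, y) ∈ s i} ∂m2 P :=
        lintegral_piM_prod _ fun i => Kernel.measurable_kernel_prodMk_right (hs i)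
    _ = ∏ i, P (s i) := Finset.prod_congr rfl fun i _ => (hκ.apply_eq_lintegral (hs i)).symm

lemma IsCondKernel.lintegral_indicator_mul (hκ : IsCondKernel P κ) {A : Set (Fin n → X)}
    (hA : MeasurableSet A) {g : (Fin n → Y) → ℝ≥0∞} (hg : Measurable g) :
    ∫⁻ z, A.indicator 1 (fstv z) * g (sndv z) ∂piM n P
      = ∫⁻ y, kpi κ y A * g y ∂piM n (m2 P) := by
  have hm : Measurable fun (p : (Fin n → Y) × (Fin n → X)) (i : Fin n) => (p.2 i, p.1 i) := by
    fun_prop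
  have hA₁ : Measurable (A.indicator (1 : (Fin n → X) → ℝ≥0∞)) := measurable_one.indicator hA
  have hAg : Measurable fun z : Fin n → X × Y =>
      A.indicator (1 : (Fin n → X) → ℝ≥0∞) (fstv z) * g (sndv z) :=
    (hA₁.comp measurable_fstv).mul (hg.comp measurable_sndv)
  rw [hκ.piM_eq_map_compProd, lintegral_map hAg hm]
  refine (Measure.lintegral_compProd (hAg.comp hm)).trans (lintegral_congr fun y => ?_)
  change ∫⁻ x, A.indicator 1 x * g y ∂kpi κ y = _
  rw [lintegral_mul_const _ hA₁, lintegral_indicator_one hA]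

lemma IsCondKernel.lintegral_kpi (hκ : IsCondKernel P κ) {A : Set (Fin n → X)}
    (hA : MeasurableSet A) : ∫⁻ y, kpi κ y A ∂piM n (m2 P) = piM n (m1 P) A := by
  have h := hκ.lintegral_indicator_mul hA (measurable_const (a := 1))
  simp only [mul_one] at h
  rw [← h, (measurePreserving_fstv P n).lintegral_comp (measurable_one.indicator hA),
    lintegral_indicator_one hA]

end ProductKernel

/-! ### Duality -/

section Duality

variable {q : ℝ} {Z D : ℝ≥0∞}

lemma rpow_one_div_mul_rpow (hq : q ≠ 0) (hZ₀ : Z ≠ 0) (hZ : Z ≠ ⊤) :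
    Z ^ (1 / q) * Z ^ ((q - 1) / q) = Z := by
  rw [← ENNReal.rpow_add _ _ hZ₀ hZ, ← add_div, add_sub_cancel, div_self hq, ENNReal.rpow_one]

lemma rpow_one_div_le_of_le_mul_rpow (hq : 0 < q) (hZ : Z ≠ ⊤) (h : Z ≤ D * Z ^ ((q - 1) / q)) :
    Z ^ (1 / q) ≤ D := by
  rcases eq_or_ne Z 0 with rfl | hZ₀
  · simp only [ENNReal.zero_rpow_of_pos (one_div_pos.2 hq), zero_le]
  rw [← ENNReal.mul_le_mul_iff_left (ENNReal.rpow_pos (pos_iff_ne_zero.2 hZ₀) hZ).ne'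
    (ENNReal.rpow_ne_top_of_ne_zero hZ₀ hZ)]
  exact (rpow_one_div_mul_rpow hq.ne' hZ₀ hZ).trans_le h

lemma le_rpow_one_div_of_mul_rpow_le (hq : q ≠ 0) (hZ₀ : Z ≠ 0) (hZ : Z ≠ ⊤)
    (h : D * Z ^ ((q - 1) / q) ≤ Z) : D ≤ Z ^ (1 / q) := by
  rw [← ENNReal.mul_le_mul_iff_left (ENNReal.rpow_pos (pos_iff_ne_zero.2 hZ₀) hZ).ne'
    (ENNReal.rpow_ne_top_of_ne_zero hZ₀ hZ)]
  exact h.trans_eq (rpow_one_div_mul_rpow hq hZ₀ hZ).symm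

lemma rpow_le_rpow_of_nonpos {a b : ℝ≥0∞} (hq : q ≤ 0) (hab : a ≤ b) : b ^ q ≤ a ^ q := by
  rw [← neg_neg q, ENNReal.rpow_neg, ENNReal.rpow_neg a]
  exact ENNReal.inv_le_inv.2 (ENNReal.rpow_le_rpow hab (neg_nonneg.2 hq))

lemma exists_rpow_mem_Icc (q : ℝ) {ε : ℝ≥0} (hε : 0 < ε) :
    ∃ m M : ℝ≥0, 0 < m ∧ ∀ a ∈ Icc (ε : ℝ≥0∞) 1, a ^ q ∈ Icc (m : ℝ≥0∞) M := by
  rcases le_total 0 q with hq | hq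
  · refine ⟨ε ^ q, 1, NNReal.rpow_pos hε, fun a ha => ⟨?_, ENNReal.rpow_le_one ha.2 hq⟩⟩
    rw [ENNReal.coe_rpow_of_ne_zero hε.ne']
    exact ENNReal.rpow_le_rpow ha.1 hq
  · refine ⟨1, ε ^ q, one_pos, fun a ha => ⟨?_, ?_⟩⟩
    · simpa only [ENNReal.one_rpow, ENNReal.coe_one] using rpow_le_rpow_of_nonpos hq ha.2
    · rw [ENNReal.coe_rpow_of_ne_zero hε.ne']
      exact rpow_le_rpow_of_nonpos hq ha.1

lemma tendsto_lintegral_max_rpow {Ω : Type*} [MeasurableSpace Ω] {μ : Measure Ω}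
    [IsFiniteMeasure μ] {f : Ω → ℝ≥0∞} (hf : Measurable f) (hf₁ : ∀ x, f x ≤ 1) (q : ℝ)
    {ε : ℕ → ℝ≥0∞} (hε : Antitone ε) (hε₁ : ∀ k, ε k ≤ 1) (hε₀ : Tendsto ε atTop (𝓝 0)) :
    Tendsto (fun k => ∫⁻ x, max (f x) (ε k) ^ q ∂μ) atTop (𝓝 (∫⁻ x, f x ^ q ∂μ)) := by
  have hmeas (k : ℕ) : Measurable fun x => max (f x) (ε k) ^ q :=
    (hf.max measurable_const).pow_const q
  have hlim (x : Ω) : Tendsto (fun k => max (f x) (ε k) ^ q) atTop (𝓝 (f x ^ q)) := by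
    have hmax : Tendsto (fun k => max (f x) (ε k)) atTop (𝓝 (f x)) := by
      simpa only [zero_le, sup_of_le_left] using (tendsto_const_nhds (x := f x)).max hε₀
    exact (ENNReal.continuous_rpow_const.tendsto _).comp hmax
  rcases le_total 0 q with hq | hq
  · refine tendsto_lintegral_of_dominated_convergence 1 hmeas (fun k => ae_of_all _ fun x => ?_)
      ?_ (ae_of_all _ hlim)
    · exact ENNReal.rpow_le_one (max_le (hf₁ x) (hε₁ k)) hq
    · simp only [Pi.one_apply, lintegral_one, measure_ne_top, ne_eq, not_false_eq_true]
  · refine lintegral_tendsto_of_tendsto_of_monotone (fun k => (hmeas k).aemeasurable)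
      (ae_of_all _ fun x i j hij => ?_) (ae_of_all _ hlim)
    exact rpow_le_rpow_of_nonpos hq (max_le_max le_rfl (hε hij))

variable {P : Measure (X × Y)} [IsProbabilityMeasure P] {κ : Kernel Y X} [IsMarkovKernel κ] {n : ℕ}
  {A : Set (Fin n → X)}

lemma IsCondKernel.enorm_kpi_le (hκ : IsCondKernel P κ) (hA : MeasurableSet A) (hq : 1 ≤ q)
    (h : ∀ v : (Fin n → Y) → ℝ≥0∞, Measurable v → (∀ y, v y ≤ 1) →
      ∫⁻ z, A.indicator 1 (fstv z) * v (sndv z) ^ ((q - 1) / q) ∂piM n P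
        ≤ D * (∫⁻ y, v y ∂piM n (m2 P)) ^ ((q - 1) / q)) :
    enorm (piM n (m2 P)) (fun y => kpi κ y A) q ≤ D := by
  have hq₀ : 0 < q := one_pos.trans_le hq
  have hf := measurable_kpi_apply κ hA
  have hf₁ (y : Fin n → Y) : kpi κ y A ^ q ≤ 1 := ENNReal.rpow_le_one prob_le_one hq₀.le
  refine rpow_one_div_le_of_le_mul_rpow hq₀ (lintegral_ne_top_of_le_coe (M := 1) hf₁) ?_
  refine le_trans (le_of_eq ?_) (h (fun y => kpi κ y A ^ q) (hf.pow_const q) hf₁)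
  rw [hκ.lintegral_indicator_mul hA ((hf.pow_const q).pow_const _)]
  refine lintegral_congr fun y => ?_
  calc kpi κ y A ^ q = kpi κ y A ^ (1 + (q - 1)) := by rw [add_sub_cancel]
    _ = kpi κ y A * (kpi κ y A ^ q) ^ ((q - 1) / q) := by
        rw [ENNReal.rpow_add_of_nonneg _ _ zero_le_one (sub_nonneg.2 hq), ENNReal.rpow_one,
          ← ENNReal.rpow_mul, mul_div_cancel₀ _ hq₀.ne']

lemma IsCondKernel.le_enorm_max_kpi (hκ : IsCondKernel P κ) (hA : MeasurableSet A) (hq : q ≠ 0)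
    (h : ∀ (v : (Fin n → Y) → ℝ≥0∞) (m M : ℝ≥0), Measurable v → 0 < m →
      (∀ y, v y ∈ Icc (m : ℝ≥0∞) M) → D * (∫⁻ y, v y ∂piM n (m2 P)) ^ ((q - 1) / q)
        ≤ ∫⁻ z, A.indicator 1 (fstv z) * v (sndv z) ^ ((q - 1) / q) ∂piM n P)
    {ε : ℝ≥0∞} (hε : 0 < ε) (hε₁ : ε ≤ 1) :
    D ≤ enorm (piM n (m2 P)) (fun y => max (kpi κ y A) ε) q := by
  lift ε to ℝ≥0 using hε₁.trans_lt ENNReal.one_lt_top |>.ne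
  set g : (Fin n → Y) → ℝ≥0∞ := fun y => max (kpi κ y A) ε
  have hg : Measurable g := (measurable_kpi_apply κ hA).max measurable_const
  have hgε (y : Fin n → Y) : g y ∈ Icc (ε : ℝ≥0∞) 1 := ⟨le_max_right _ _, max_le prob_le_one hε₁⟩
  obtain ⟨m, M, hm, hmM⟩ := exists_rpow_mem_Icc q (ENNReal.coe_pos.1 hε)
  have hZ := ne_zero_and_ne_top_of_mem_Icc hm
    (lintegral_mem_Icc (piM n (m2 P)) fun y => hmM _ (hgε y))
  refine le_rpow_one_div_of_mul_rpow_le hq hZ.1 hZ.2 ?_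
  refine (h (fun y => g y ^ q) m M (hg.pow_const q) hm fun y => hmM _ (hgε y)).trans ?_
  rw [hκ.lintegral_indicator_mul hA ((hg.pow_const q).pow_const _)]
  refine lintegral_mono fun y => ?_
  calc kpi κ y A * (g y ^ q) ^ ((q - 1) / q) ≤ g y * (g y ^ q) ^ ((q - 1) / q) := by
        gcongr
        exact le_max_left _ _
    _ = g y ^ (1 : ℝ) * g y ^ (q - 1) := by
        rw [← ENNReal.rpow_mul, mul_div_cancel₀ _ hq, ENNReal.rpow_one]
    _ = g y ^ q := by
        rw [← ENNReal.rpow_add _ _ (hε.trans_le (hgε y).1).ne'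
          ((hgε y).2.trans_lt ENNReal.one_lt_top).ne, add_sub_cancel]

lemma IsCondKernel.le_enorm_kpi (hκ : IsCondKernel P κ) (hA : MeasurableSet A) (hq : q ≠ 0)
    (h : ∀ (v : (Fin n → Y) → ℝ≥0∞) (m M : ℝ≥0), Measurable v → 0 < m →
      (∀ y, v y ∈ Icc (m : ℝ≥0∞) M) → D * (∫⁻ y, v y ∂piM n (m2 P)) ^ ((q - 1) / q)
        ≤ ∫⁻ z, A.indicator 1 (fstv z) * v (sndv z) ^ ((q - 1) / q) ∂piM n P) :
    D ≤ enorm (piM n (m2 P)) (fun y => kpi κ y A) q := by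
  obtain ⟨ε, hε_anti, hε_mem, hε₀⟩ := exists_seq_strictAnti_tendsto' (zero_lt_one' ℝ≥0∞)
  have hlim := (ENNReal.continuous_rpow_const (y := 1 / q)).tendsto _ |>.comp
    (tendsto_lintegral_max_rpow (μ := piM n (m2 P)) (measurable_kpi_apply κ hA)
      (fun y => prob_le_one) q hε_anti.antitone (fun k => (hε_mem k).2.le) hε₀)
  exact ge_of_tendsto' hlim fun k => hκ.le_enorm_max_kpi hA hq h (hε_mem k).1 (hε_mem k).2.le

end Duality

/-! ### Exponents -/

section Exponents

variable {n : ℕ}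

lemma antitone_neg_inv_mul_elog (n : ℕ) :
    Antitone fun x : ℝ≥0∞ => -((((n : ℝ)⁻¹ : ℝ) : EReal) * elog x) := fun _ _ hxy =>
  EReal.neg_le_neg_iff.2 <| mul_le_mul_of_nonneg_left (ENNReal.log_monotone hxy) <|
    EReal.coe_nonneg.2 (by positivity)

lemma neg_inv_mul_elog_ofReal_exp (hn : n ≠ 0) (K : ℝ) :
    -((((n : ℝ)⁻¹ : ℝ) : EReal) * elog (ENNReal.ofReal (Real.exp (-(n * K))))) = K := by
  have hn' : (n : ℝ) ≠ 0 := Nat.cast_ne_zero.2 hn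
  have hlog : elog (ENNReal.ofReal (Real.exp (-(n * K)))) = ((-(n * K) : ℝ) : EReal) := by
    change ENNReal.log _ = _
    rw [ENNReal.log_ofReal_of_pos (Real.exp_pos _), Real.log_exp]
  rw [hlog, ← EReal.coe_mul, ← EReal.coe_neg]
  congr 1
  field_simp

lemma ofReal_exp_pow_mul_rpow (n : ℕ) (c l α : ℝ) :
    ENNReal.ofReal (Real.exp (-c)) ^ n * ENNReal.ofReal (Real.exp (-(n * α))) ^ l
      = ENNReal.ofReal (Real.exp (-(n * (l * α + c)))) := by
  rw [← ENNReal.ofReal_pow (Real.exp_pos _).le, ENNReal.ofReal_rpow_of_pos (Real.exp_pos _),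
    ← ENNReal.ofReal_mul (by positivity), ← Real.exp_nat_mul, ← Real.exp_mul, ← Real.exp_add]
  ring_nf

variable {P : Measure (X × Y)} {κ : Kernel Y X} {q α K : ℝ}

lemma coe_le_qStabSup (hn : n ≠ 0)
    (h : ∀ A : Set (Fin n → X), MeasurableSet A →
      piM n (m1 P) A ≤ ENNReal.ofReal (Real.exp (-(n * α))) →
      enorm (piM n (m2 P)) (fun y => kpi κ y A) q ≤ ENNReal.ofReal (Real.exp (-(n * K)))) :
    (K : EReal) ≤ qStabSup P κ n q α :=
  (neg_inv_mul_elog_ofReal_exp hn K).ge.trans <|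
    antitone_neg_inv_mul_elog n (iSup_le fun A => iSup_le fun hA => iSup_le (h A hA))

lemma qStabInf_le_coe (hn : n ≠ 0)
    (h : ∀ A : Set (Fin n → X), MeasurableSet A →
      ENNReal.ofReal (Real.exp (-(n * α))) ≤ piM n (m1 P) A →
      ENNReal.ofReal (Real.exp (-(n * K))) ≤ enorm (piM n (m2 P)) (fun y => kpi κ y A) q) :
    qStabInf P κ n q α ≤ K :=
  (antitone_neg_inv_mul_elog n (le_iInf fun A => le_iInf fun hA => le_iInf (h A hA))).trans
    (neg_inv_mul_elog_ofReal_exp hn K).le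

end Exponents

/-! ### The strong `q`-stability theorem -/

section Stability

variable {P : Measure (X × Y)} [IsProbabilityMeasure P] {n : ℕ} {α q l b c K : ℝ}

lemma marginalDivBound_of_le_phiRinf {r : EReal} (hr : ∀ t, divE t r = ((b * t : ℝ) : EReal))
    (h : ∀ s : ℝ, 0 ≤ s → ((l * s + c : ℝ) : EReal) ≤ phiRinf P r s) :
    MarginalDivBound P l b c := by
  intro Q hQ hQP
  have := (h _ ENNReal.toReal_nonneg).trans (phiRinf_le_klDiv_sub hQP hr)
  linarith [EReal.coe_le_coe_iff.1 this]

lemma add_mul_klDiv_le_of_le_ThetaGe1 {r : EReal} (hr : ∀ t, divE t r = ((b * t : ℝ) : EReal))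
    (hK : (K : EReal) ≤ ThetaGe1 P r α) {Q : Measure (X × Y)} [IsProbabilityMeasure Q]
    (hQ : klDiv Q P ≠ ⊤) (hα : α ≤ (klDiv (m1 Q) (m1 P)).toReal) :
    K + b * (klDiv (m2 Q) (m2 P)).toReal ≤ (klDiv Q P).toReal := by
  have := (hK.trans (iInf₂_le _ hα)).trans <|
    (lce1_le_self _ ENNReal.toReal_nonneg).trans (phiRinf_le_klDiv_sub hQ hr)
  linarith [EReal.coe_le_coe_iff.1 this]

lemma exists_phiRinf_ne_top {r : EReal} (hr : ∀ t, divE t r = ((b * t : ℝ) : EReal))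
    {B : Set X} (hB : MeasurableSet B) (hB₀ : m1 P B ≠ 0)
    (hBα : m1 P B < ENNReal.ofReal (Real.exp (-α))) : ∃ s, α < s ∧ phiRinf P r s ≠ ⊤ := by
  have hZ : ∫⁻ z, B.indicator 1 z.1 * (1 : Y → ℝ≥0∞) z.2 ∂P ≠ 0 := by
    simp only [Pi.one_apply, mul_one]
    rwa [← lintegral_map (measurable_one.indicator hB) measurable_fst, lintegral_indicator_one hB]
  obtain ⟨Q, hQ, hQP, hQB, -⟩ := exists_lintegral_mul_eq_ofReal_exp P
    (measurable_one.indicator hB) measurable_one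
    (fun x => indicator_le_self' (fun _ _ => zero_le) x) (fun _ => le_rfl) hZ
  have hexp := (ofReal_exp_neg_klDiv_le_measure (klDiv_m1_ne_top hQP) hB hQB).trans_lt hBα
  exact ⟨_, neg_lt_neg_iff.1 (Real.exp_lt_exp.1
      ((ENNReal.ofReal_lt_ofReal_iff (Real.exp_pos _)).1 hexp)),
    ((phiRinf_le_klDiv_sub hQP hr).trans_lt (EReal.coe_lt_top _)).ne⟩

lemma MarginalDivBound.lintegral_indicator_piM_le (h : MarginalDivBound P l b c) (hl : 0 ≤ l)
    (hb : 0 ≤ b) {A : Set (Fin n → X)} (hA : MeasurableSet A)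
    (hAα : piM n (m1 P) A ≤ ENNReal.ofReal (Real.exp (-(n * α)))) {v : (Fin n → Y) → ℝ≥0∞}
    (hv : Measurable v) (hv₁ : ∀ y, v y ≤ 1) :
    ∫⁻ z, A.indicator 1 (fstv z) * v (sndv z) ^ b ∂piM n P
      ≤ ENNReal.ofReal (Real.exp (-(n * (l * α + c)))) * (∫⁻ y, v y ∂piM n (m2 P)) ^ b := by
  calc ∫⁻ z, A.indicator 1 (fstv z) * v (sndv z) ^ b ∂piM n P
    _ ≤ ∫⁻ z, A.indicator 1 (fstv z) ^ l * v (sndv z) ^ b ∂piM n P := by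
        refine lintegral_mono fun z => mul_le_mul' ?_ le_rfl
        by_cases hz : fstv z ∈ A <;> simp [hz]
    _ ≤ ENNReal.ofReal (Real.exp (-c)) ^ n * (∫⁻ x, A.indicator 1 x ∂piM n (m1 P)) ^ l
          * (∫⁻ y, v y ∂piM n (m2 P)) ^ b :=
        h.lintegral_piM_le hl hb (measurable_one.indicator hA) hv
          (fun x => indicator_le_self' (fun _ _ => zero_le) x) hv₁
    _ ≤ ENNReal.ofReal (Real.exp (-(n * (l * α + c)))) * (∫⁻ y, v y ∂piM n (m2 P)) ^ b := by
        rw [lintegral_indicator_one hA, ← ofReal_exp_pow_mul_rpow]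
        gcongr

lemma CouplingDivBound.le_lintegral_indicator_piM (h : CouplingDivBound P l b c) (hl : 0 < l)
    {A : Set (Fin n → X)} (hA : MeasurableSet A)
    (hAα : ENNReal.ofReal (Real.exp (-(n * α))) ≤ piM n (m1 P) A) {v : (Fin n → Y) → ℝ≥0∞}
    {m M : ℝ≥0} (hv : Measurable v) (hm : 0 < m) (hvmM : ∀ y, v y ∈ Icc (m : ℝ≥0∞) M) :
    ENNReal.ofReal (Real.exp (-(n * (l * α + c)))) * (∫⁻ y, v y ∂piM n (m2 P)) ^ b
      ≤ ∫⁻ z, A.indicator 1 (fstv z) * v (sndv z) ^ b ∂piM n P := by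
  calc ENNReal.ofReal (Real.exp (-(n * (l * α + c)))) * (∫⁻ y, v y ∂piM n (m2 P)) ^ b
    _ ≤ ENNReal.ofReal (Real.exp (-c)) ^ n * (∫⁻ x, A.indicator 1 x ∂piM n (m1 P)) ^ l
          * (∫⁻ y, v y ∂piM n (m2 P)) ^ b := by
        rw [lintegral_indicator_one hA, ← ofReal_exp_pow_mul_rpow]
        gcongr
    _ ≤ ∫⁻ z, A.indicator 1 (fstv z) ^ l * v (sndv z) ^ b ∂piM n P :=
        h.le_lintegral_piM hl (measurable_one.indicator hA) hv
          (fun x => indicator_le_self' (fun _ _ => zero_le) x) hm hvmM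
    _ = ∫⁻ z, A.indicator 1 (fstv z) * v (sndv z) ^ b ∂piM n P := by
        refine lintegral_congr fun z => ?_
        by_cases hz : fstv z ∈ A <;> simp [hz, hl]

lemma lintegral_indicator_piM_le_of_le_ThetaGe1 {r : EReal}
    (hr : ∀ t, divE t r = ((b * t : ℝ) : EReal)) (hb : 0 ≤ b) (hα : 0 ≤ α)
    (hK : (K : EReal) ≤ ThetaGe1 P r α) {A : Set (Fin n → X)} (hA : MeasurableSet A)
    (hAα : piM n (m1 P) A ≤ ENNReal.ofReal (Real.exp (-(n * α)))) {v : (Fin n → Y) → ℝ≥0∞}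
    (hv : Measurable v) (hv₁ : ∀ y, v y ≤ 1) :
    ∫⁻ z, A.indicator 1 (fstv z) * v (sndv z) ^ b ∂piM n P
      ≤ ENNReal.ofReal (Real.exp (-(n * K))) * (∫⁻ y, v y ∂piM n (m2 P)) ^ b := by
  by_cases hB : ∃ B, MeasurableSet B ∧ m1 P B ≠ 0 ∧ m1 P B < ENNReal.ofReal (Real.exp (-α))
  · obtain ⟨B, hB, hB₀, hBα⟩ := hB
    obtain ⟨s, hs, hφ⟩ := exists_phiRinf_ne_top hr hB hB₀ hBα
    obtain ⟨l, c, hl, rfl, hline⟩ := exists_line_le_of_le_lce1 (phiRinf P r) hα hs hφ hK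
    exact (marginalDivBound_of_le_phiRinf hr hline).lintegral_indicator_piM_le hl hb hA hAα hv hv₁
  · -- Here `exp (-α)` is at most the mass of every non-null set, so no line is needed.
    push Not at hB
    have hexp (a : ℝ) :
        ENNReal.ofReal (Real.exp (-a)) ^ n = ENNReal.ofReal (Real.exp (-(n * a))) := by
      rw [← ENNReal.ofReal_pow (Real.exp_pos _).le, ← Real.exp_nat_mul, mul_neg]
    rw [← hexp] at hAα ⊢
    exact lintegral_piM_indicator_mul_rpow_le (by positivity) ENNReal.ofReal_ne_top hB
      (fun B w hB hBα hw hw₁ => lintegral_indicator_mul_rpow_le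
        (fun Q _ hQ => add_mul_klDiv_le_of_le_ThetaGe1 hr hK hQ) hb hB hBα hw hw₁) hA hAα hv hv₁

variable {κ : Kernel Y X} [IsMarkovKernel κ]

lemma ThetaGe1_le_qStabSup (hκ : IsCondKernel P κ) (hn : n ≠ 0) (hα : 0 ≤ α) (hq : 1 ≤ q) :
    ThetaGe1 P (conj q) α ≤ qStabSup P κ n q α :=
  EReal.ge_of_forall_gt_iff_ge.1 fun _ hK => coe_le_qStabSup hn fun _ hA hAα =>
    hκ.enorm_kpi_le hA hq fun _ => lintegral_indicator_piM_le_of_le_ThetaGe1 (divE_conj · q)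
      (div_nonneg (sub_nonneg.2 hq) (zero_le_one.trans hq)) hα hK.le hA hAα

lemma qStabInf_le_ThetaLT1 (hκ : IsCondKernel P κ) (hn : n ≠ 0) (hα : 0 < α) (hq : q ≠ 0)
    (hq₁ : q ≠ 1) : qStabInf P κ n q α ≤ ThetaLT1 P (q / (q - 1)) α := by
  have hr : q / (q - 1) ≠ 0 := div_ne_zero hq (sub_ne_zero.2 hq₁)
  refine EReal.le_of_forall_lt_iff_le.1 fun z hz => ?_
  obtain ⟨l, c, hl, rfl, hline⟩ :=
    exists_lt_line_of_uce1_lt (phiLT1 P (q / (q - 1))) hα (phiLT1_zero_ne_bot _ hr) hz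
  have hP := couplingDivBound_of_phiLT1_lt hr hline
  rw [inv_div] at hP
  exact qStabInf_le_coe hn fun A hA hAα => hκ.le_enorm_kpi hA hq fun v m M hv hm hvmM =>
    hP.le_lintegral_indicator_piM hl hA hAα hv hm hvmM

lemma IsCondKernel.ae_kpi_eq_one (hκ : IsCondKernel P κ) {A : Set (Fin n → X)}
    (hA : MeasurableSet A) (hA₁ : piM n (m1 P) A = 1) :
    (fun y => kpi κ y A) =ᵐ[piM n (m2 P)] 1 := by
  have h := (hκ.lintegral_kpi hA).trans hA₁
  refine ae_eq_of_ae_le_of_lintegral_le (ae_of_all _ fun y => prob_le_one)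
    (h ▸ ENNReal.one_ne_top) aemeasurable_one ?_
  simp only [h, Pi.one_apply, lintegral_one, measure_univ, le_refl]

lemma qStabInf_zero_le (hκ : IsCondKernel P κ) (hn : n ≠ 0) (q : ℝ) : qStabInf P κ n q 0 ≤ 0 := by
  refine qStabInf_le_coe (K := 0) hn fun A hA hA₁ => ?_
  simp only [mul_zero, neg_zero, Real.exp_zero, ENNReal.ofReal_one] at hA₁ ⊢
  have hae := hκ.ae_kpi_eq_one hA (prob_le_one.antisymm hA₁)
  have hone : ∫⁻ y, kpi κ y A ^ q ∂piM n (m2 P) = 1 := by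
    rw [lintegral_congr_ae (hae.mono fun y hy => congrArg (· ^ q) hy)]
    simp only [Pi.one_apply, ENNReal.one_rpow, lintegral_one, measure_univ]
  rw [enorm, hone, ENNReal.one_rpow]

end Stability

theorem statement12_general (P : Measure (X × Y)) [IsProbabilityMeasure P]
    (κ : Kernel Y X) [IsMarkovKernel κ] (hκ : IsCondKernel P κ)
    (n : ℕ) (hn : 1 ≤ n) (α : ℝ) (hα0 : 0 ≤ α) :
    (∀ q : ℝ, 1 ≤ q → ThetaGe1 P (conj q) α ≤ qStabSup P κ n q α) ∧
    (∀ q : ℝ, q < 1 → q ≠ 0 →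
      (0 < α → qStabInf P κ n q α ≤ ThetaLT1 P (q / (q - 1)) α) ∧
      qStabInf P κ n q 0 ≤ (0 : EReal)) :=
  have hn₀ : n ≠ 0 := Nat.one_le_iff_ne_zero.1 hn
  ⟨fun _ => ThetaGe1_le_qStabSup hκ hn₀ hα0, fun q hq₁ hq =>
    ⟨fun hα => qStabInf_le_ThetaLT1 hκ hn₀ hα hq hq₁.ne, qStabInf_zero_le hκ hn₀ q⟩⟩

/-- Strong q-stability theorem, inequalities;
Theorem `thm:strongqstability`. -/
theorem statement12 [TopologicalSpace X] [PolishSpace X] [BorelSpace X]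
    [TopologicalSpace Y] [PolishSpace Y] [BorelSpace Y]
    (P : Measure (X × Y)) [IsProbabilityMeasure P]
    (hndX : ∀ x : X, m1 P ≠ Measure.dirac x) (hndY : ∀ y : Y, m2 P ≠ Measure.dirac y)
    (κ : Kernel Y X) [IsMarkovKernel κ] (hκ : IsCondKernel P κ)
    (n : ℕ) (hn : 1 ≤ n)
    (α : ℝ) (hα0 : 0 ≤ α) (hαmax : (α : EReal) ≤ alphaMax (m1 P)) :
    (∀ q : ℝ, 1 ≤ q → ThetaGe1 P (conj q) α ≤ qStabSup P κ n q α) ∧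
    (∀ q : ℝ, q < 1 → q ≠ 0 →
      (0 < α → qStabInf P κ n q α ≤ ThetaLT1 P (q / (q - 1)) α) ∧
      qStabInf P κ n q 0 ≤ (0 : EReal)) :=
  statement12_general P κ hκ n hn α hα0

end BL
end
end

section
/- Min of coupled relative entropies equals the coupled min (Lemma on η): let P_{XY} be a probability measure on 𝒳 × 𝒴, let R_{X₁}, R_{X₂} be probability measures on 𝒳, R_{Y₁}, R_{Y₂} probability measures on 𝒴, and b_{i,j} ∈ ℝ for i, j ∈ {1,2}. Then min over i, j ∈ {1,2} of [𝔻(R_{X_i}, R_{Y_j} ‖ P_{XY}) + b_{i,j}] equals the infimum over all probability measures R on 𝒳 × 𝒴 × 𝒳 × 𝒴 whose four coordinate marginals are R_{X₁}, R_{Y₁}, R_{X₂}, R_{Y₂} (in this order) of min over i, j ∈ {1,2} of [D(R_{X_i Y_j} ‖ P_{XY}) + b_{i,j}], where R_{X_i Y_j} denotes the joint marginal of R on the i-th 𝒳-coordinate and the j-th 𝒴-coordinate. -/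
open MeasureTheory ProbabilityTheory Set Filter
open scoped ENNReal NNReal BigOperators Classical Topology

noncomputable section

namespace BL

variable {X : Type*} {Y : Type*} [MeasurableSpace X] [MeasurableSpace Y]

/-!
Infima commute, so it is enough to see that the `(i, j)`-marginals of the laws `R` with prescribed
coordinate laws are exactly the couplings of the `i`-th and the `j`-th prescribed law. One inclusion
is immediate. For the other, put a coupling on the coordinates `i` and `j` and take the remaining
coordinates independent of it and of each other.
-/

theorem iInf_fin_two {α : Type*} [CompleteLattice α] (f : Fin 2 → α) :
    ⨅ i, f i = f 0 ⊓ f 1 := by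
  simp [← Finset.inf_univ_eq_iInf, Fin.univ_succ]

theorem gc_sub_coe_add_coe (c : ℝ) :
    GaloisConnection (fun a : EReal => a - c) (fun a : EReal => a + c) := fun _ _ =>
  EReal.sub_le_iff_le_add (.inl (EReal.coe_ne_bot c)) (.inl (EReal.coe_ne_top c))

theorem Dmin_add_coe (QX : Measure X) (QY : Measure Y) (P : Measure (X × Y)) (b : ℝ) :
    Dmin QX QY P + b = ⨅ π ∈ couplings QX QY, (KL π P + b) :=
  (gc_sub_coe_add_coe b).u_iInf₂

section JointCouplings

variable {ι κ Ω : Type*} {A : ι → Type*} {B : κ → Type*} [MeasurableSpace Ω]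
  [∀ i, MeasurableSpace (A i)] [∀ j, MeasurableSpace (B j)]

theorem map_update_apply_eq {σ : Measure Ω} {μ : ∀ i, Measure (A i)} {u : Ω → ∀ i, A i} {i : ι}
    {x : Ω → A i} (hu : ∀ k, σ.map (fun ω => u ω k) = μ k) (hx : σ.map x = μ i) (k : ι) :
    σ.map (fun ω => Function.update (u ω) i (x ω) k) = μ k := by
  obtain rfl | hk := eq_or_ne k i
  · simpa only [Function.update_self] using hx
  · simpa only [Function.update_of_ne hk] using hu k

/-- The probability measures on `Ω` under which the `A i`- and `B j`-valued coordinates have the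
prescribed laws `μ i` and `ν j`; `e` says which coordinates a point of `Ω` has. -/
def jointCouplings (e : Ω ≃ᵐ (∀ i, A i) × (∀ j, B j)) (μ : ∀ i, Measure (A i))
    (ν : ∀ j, Measure (B j)) : Set (Measure Ω) :=
  {R | IsProbabilityMeasure R ∧ (∀ i, R.map (fun z => (e z).1 i) = μ i) ∧
    ∀ j, R.map (fun z => (e z).2 j) = ν j}

theorem map_pair_mem_couplings {e : Ω ≃ᵐ (∀ i, A i) × (∀ j, B j)} {μ : ∀ i, Measure (A i)}
    {ν : ∀ j, Measure (B j)} {R : Measure Ω} (hR : R ∈ jointCouplings e μ ν) (i : ι) (j : κ) :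
    R.map (fun z => ((e z).1 i, (e z).2 j)) ∈ couplings (μ i) (ν j) := by
  obtain ⟨hprob, hμ, hν⟩ := hR
  refine ⟨Measure.isProbabilityMeasure_map (by fun_prop), ?_, ?_⟩
  · rw [Measure.map_map measurable_fst (by fun_prop)]
    exact hμ i
  · rw [Measure.map_map measurable_snd (by fun_prop)]
    exact hν j

variable (e : Ω ≃ᵐ (∀ i, A i) × (∀ j, B j)) (μ : ∀ i, Measure (A i)) (ν : ∀ j, Measure (B j))
  [∀ i, IsProbabilityMeasure (μ i)] [∀ j, IsProbabilityMeasure (ν j)]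

theorem exists_mem_jointCouplings_map_pair_eq {i : ι} {j : κ} {π : Measure (A i × B j)}
    (hπ : π ∈ couplings (μ i) (ν j)) :
    ∃ R ∈ jointCouplings e μ ν, R.map (fun z => ((e z).1 i, (e z).2 j)) = π := by
  obtain ⟨hprob, hπμ, hπν⟩ := hπ
  let σ := π.prod ((Measure.infinitePi μ).prod (Measure.infinitePi ν))
  have hσ_pair : σ.map Prod.fst = π := measurePreserving_fst.map_eq
  have hσ_law_fst (k : ι) : σ.map (fun w => w.2.1 k) = μ k :=
    ((measurePreserving_eval_infinitePi μ k).comp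
      (measurePreserving_fst.comp measurePreserving_snd)).map_eq
  have hσ_law_snd (l : κ) : σ.map (fun w => w.2.2 l) = ν l :=
    ((measurePreserving_eval_infinitePi ν l).comp
      (measurePreserving_snd.comp measurePreserving_snd)).map_eq
  have hσ_pair_fst : σ.map (fun w => w.1.1) = μ i := by
    rw [← hπμ, ← hσ_pair, Measure.map_map measurable_fst measurable_fst, Function.comp_def]
  have hσ_pair_snd : σ.map (fun w => w.1.2) = ν j := by
    rw [← hπν, ← hσ_pair, Measure.map_map measurable_snd measurable_fst, Function.comp_def]
  let splice (w : (A i × B j) × (∀ i, A i) × (∀ j, B j)) : (∀ i, A i) × (∀ j, B j) :=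
    (Function.update w.2.1 i w.1.1, Function.update w.2.2 j w.1.2)
  have hsplice : Measurable splice :=
    (measurable_update'.comp (measurable_snd.fst.prodMk measurable_fst.fst)).prodMk
      (measurable_update'.comp (measurable_snd.snd.prodMk measurable_fst.snd))
  have hlift : Measurable (e.symm ∘ splice) := e.symm.measurable.comp hsplice
  have hprob_map := Measure.isProbabilityMeasure_map (μ := σ) hlift.aemeasurable
  refine ⟨σ.map (e.symm ∘ splice), ⟨hprob_map, fun k => ?_, fun l => ?_⟩, ?_⟩
  · rw [Measure.map_map (by fun_prop) hlift]
    simpa [Function.comp_def, splice] using map_update_apply_eq hσ_law_fst hσ_pair_fst k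
  · rw [Measure.map_map (by fun_prop) hlift]
    simpa [Function.comp_def, splice] using map_update_apply_eq hσ_law_snd hσ_pair_snd l
  · rw [Measure.map_map (by fun_prop) hlift]
    simpa [Function.comp_def, splice] using hσ_pair

theorem image_map_pair_jointCouplings (i : ι) (j : κ) :
    (fun R => R.map fun z => ((e z).1 i, (e z).2 j)) '' jointCouplings e μ ν =
      couplings (μ i) (ν j) :=
  Subset.antisymm (image_subset_iff.2 fun _ hR => map_pair_mem_couplings hR i j)
    fun _ hπ => exists_mem_jointCouplings_map_pair_eq e μ ν hπ

theorem statement18_general (P : ∀ i j, Measure (A i × B j)) (b : ι → κ → ℝ) :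
    ⨅ i, ⨅ j, (Dmin (μ i) (ν j) (P i j) + (b i j : EReal)) =
      ⨅ R ∈ jointCouplings e μ ν, ⨅ i, ⨅ j,
        (KL (R.map fun z => ((e z).1 i, (e z).2 j)) (P i j) + (b i j : EReal)) := by
  calc
    _ = ⨅ i, ⨅ j, ⨅ π ∈ couplings (μ i) (ν j), (KL π (P i j) + (b i j : EReal)) := by
      simp only [Dmin_add_coe]
    _ = ⨅ i, ⨅ j, ⨅ R ∈ jointCouplings e μ ν,
          (KL (R.map fun z => ((e z).1 i, (e z).2 j)) (P i j) + (b i j : EReal)) := by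
      simp only [← image_map_pair_jointCouplings e μ ν, iInf_image]
    _ = _ := by
      simp only [iInf_comm (ι' := Measure Ω), iInf_comm (ι' := _ ∈ jointCouplings e μ ν)]

end JointCouplings

/-- A quadruple read as the pair of its two `X`-coordinates and its two `Y`-coordinates. -/
def quadEquiv (X Y : Type*) [MeasurableSpace X] [MeasurableSpace Y] :
    X × Y × X × Y ≃ᵐ (Fin 2 → X) × (Fin 2 → Y) where
  toFun z := (![z.1, z.2.2.1], ![z.2.1, z.2.2.2])
  invFun w := (w.1 0, w.2 0, w.1 1, w.2 1)
  left_inv _ := rfl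
  right_inv w := by ext i <;> fin_cases i <;> rfl
  measurable_toFun :=
    (measurable_pi_iff.2 <| Fin.forall_fin_two.2 ⟨measurable_fst, measurable_snd.snd.fst⟩).prodMk
      (measurable_pi_iff.2 <| Fin.forall_fin_two.2 ⟨measurable_snd.fst, measurable_snd.snd.snd⟩)
  measurable_invFun := by
    change Measurable fun w : (Fin 2 → X) × (Fin 2 → Y) => (w.1 0, w.2 0, w.1 1, w.2 1)
    fun_prop

@[simp]
theorem quadEquiv_apply (z : X × Y × X × Y) :
    quadEquiv X Y z = (![z.1, z.2.2.1], ![z.2.1, z.2.2.2]) :=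
  rfl

instance isProbabilityMeasure_vecCons_pair (μ₁ μ₂ : Measure X) [IsProbabilityMeasure μ₁]
    [IsProbabilityMeasure μ₂] (i : Fin 2) : IsProbabilityMeasure (![μ₁, μ₂] i) := by
  fin_cases i <;> assumption

theorem mem_jointCouplings_quadEquiv {μ₁ μ₂ : Measure X} {ν₁ ν₂ : Measure Y}
    {R : Measure (X × Y × X × Y)} :
    R ∈ jointCouplings (quadEquiv X Y) ![μ₁, μ₂] ![ν₁, ν₂] ↔
      IsProbabilityMeasure R ∧ R.map (fun z => z.1) = μ₁ ∧ R.map (fun z => z.2.1) = ν₁ ∧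
        R.map (fun z => z.2.2.1) = μ₂ ∧ R.map (fun z => z.2.2.2) = ν₂ := by
  simp only [jointCouplings, mem_ofPred_eq, Fin.forall_fin_two, quadEquiv_apply,
    Matrix.cons_val_zero, Matrix.cons_val_one]
  tauto

/-- Min of coupled relative entropies equals the coupled min;
Lemma `lem:eta`. -/
theorem statement18 [TopologicalSpace X] [PolishSpace X] [BorelSpace X]
    [TopologicalSpace Y] [PolishSpace Y] [BorelSpace Y]
    (P : Measure (X × Y)) [IsProbabilityMeasure P]
    (RX1 RX2 : Measure X) (RY1 RY2 : Measure Y)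
    [IsProbabilityMeasure RX1] [IsProbabilityMeasure RX2]
    [IsProbabilityMeasure RY1] [IsProbabilityMeasure RY2]
    (b11 b12 b21 b22 : ℝ) :
    min (min (Dmin RX1 RY1 P + (b11 : EReal)) (Dmin RX1 RY2 P + (b12 : EReal)))
        (min (Dmin RX2 RY1 P + (b21 : EReal)) (Dmin RX2 RY2 P + (b22 : EReal))) =
      ⨅ (R : Measure (X × Y × X × Y)) (_ : IsProbabilityMeasure R)
        (_ : R.map (fun z => z.1) = RX1) (_ : R.map (fun z => z.2.1) = RY1)
        (_ : R.map (fun z => z.2.2.1) = RX2) (_ : R.map (fun z => z.2.2.2) = RY2),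
        min (min (KL (R.map fun z => (z.1, z.2.1)) P + (b11 : EReal))
                 (KL (R.map fun z => (z.1, z.2.2.2)) P + (b12 : EReal)))
            (min (KL (R.map fun z => (z.2.2.1, z.2.1)) P + (b21 : EReal))
                 (KL (R.map fun z => (z.2.2.1, z.2.2.2)) P + (b22 : EReal))) := by
  simpa [mem_jointCouplings_quadEquiv, iInf_and, iInf_fin_two] using
    statement18_general (quadEquiv X Y) ![RX1, RX2] ![RY1, RY2] (fun _ _ => P)
      ![![b11, b12], ![b21, b22]]

end BL
end
end
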